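/- arXiv:2209.01581 — 7 statements merged into one kernel-verified Lean document; each statement's English description precedes it below -/
import Mathlib

section
/- Let k be an algebraically closed field of characteristic zero, B a finitely generated k-algebra that is an integral domain, K the algebraic closure of the fraction field of B, and f ∈ B[x] a monic polynomial. Let f₁,…,fₛ ∈ B[x]_f ⊆ K(x) be logarithmically independent over (K(x), d/dx). Then there exists a finitely generated subgroup Γ of the additive group (B,+) such that for every k-algebra homomorphism c : B → k that is injective on Γ, the specializations f₁^c,…,fₛ^c ∈ k(x) are logarithmically independent over (k(x), d/dx). -/
/-- A derivation (as a bare function): additive and satisfying the Leibniz rule. -/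
def IsDerivationFun {R : Type*} [CommRing R] (δ : R → R) : Prop :=
  (∀ a b : R, δ (a + b) = δ a + δ b) ∧ (∀ a b : R, δ (a * b) = a * δ b + δ a * b)

/-- Elements `f 0, …, f (s-1)` of a differential field `(F, δ)` are logarithmically
independent over `F` if the only integers `d 0, …, d (s-1)` for which there exists
`a ∈ F, a ≠ 0` with `∑ i, d i • f i = δ a / a` are `d 0 = ⋯ = d (s-1) = 0`. -/
def LogIndep {F : Type*} [Field F] (δ : F → F) {s : ℕ} (f : Fin s → F) : Prop :=
  ∀ (d : Fin s → ℤ) (a : F), a ≠ 0 → (∑ i, (d i : F) * f i) = δ a / a → ∀ i, d i = 0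

/-!
Let `S` be the integral closure of `B` in `K`, let `W` be a power of `f` such that every
`W * F i` is a polynomial `G i ∈ B[x]`, and split `W` over `S`. The logarithmic derivatives of
nonzero elements of `k(x)` are the sums `∑ e β / (x - β)` with integers `e β`. If such a sum
equals `∑ d i * (F i)^c`, its poles are roots of `W^c`, hence images of roots `α ∈ S` of `W` under
an extension `φ : S → k` of `c`; multiplied by `W^c`, the relation says that `∑ d i • G i` and an
integer combination of the cofactors `W / (x - α)` have the same image under `φ`. If `φ` is
injective on the coefficients of the group generated by the `G i` and the cofactors, the relation
lifts to `S[x]`, and `∑ d i * F i` is the logarithmic derivative of a product of powers of the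
`x - α`.

Injectivity of `φ` on a finitely generated subgroup of `S` follows from injectivity of `c` on a
finitely generated subgroup of `B`: a generic `ℤ`-combination of the generators is integral over a
polynomial ring `B[X_s]`, and specializing the `X_s` to integers gives all elements of the subgroup
monic equations whose coefficients lie in one finitely generated group. If `φ γ = 0` with `γ ≠ 0`,
then some nonzero coefficient of the equation of `γ` lies in the kernel of `c`.
-/

open Polynomial

section IntegralExtension

theorem coeff_mem_closure_coeffs {R : Type*} [Ring R] (p : R[X]) (n : ℕ) :
    p.coeff n ∈ AddSubgroup.closure (p.coeffs : Set R) := by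
  by_cases h : p.coeff n = 0
  · exact h ▸ zero_mem _
  · exact AddSubgroup.subset_closure (coeff_mem_coeffs h)

theorem exists_fg_forall_coeff_mem {R : Type*} [Ring R] {Δ : AddSubgroup R[X]} (hΔ : Δ.FG) :
    ∃ Γ : AddSubgroup R, Γ.FG ∧ ∀ p ∈ Δ, ∀ n, p.coeff n ∈ Γ := by
  classical
  obtain ⟨t, rfl⟩ := hΔ
  refine ⟨AddSubgroup.closure (t.biUnion coeffs : Finset R), ⟨_, rfl⟩, fun p hp n ↦ ?_⟩
  induction hp using AddSubgroup.closure_induction with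
  | mem p hp =>
    exact AddSubgroup.closure_mono (Finset.subset_biUnion_of_mem coeffs hp)
      (coeff_mem_closure_coeffs p n)
  | zero => simp
  | add p q _ _ ihp ihq => simpa using add_mem ihp ihq
  | neg p _ ih => simpa using ih

theorem eval_intCast_mem_closure_coeffs {σ R : Type*} [CommRing R] (n : σ → ℤ)
    (p : MvPolynomial σ R) :
    MvPolynomial.eval (fun i ↦ (n i : R)) p ∈ AddSubgroup.closure (p.coeffs : Set R) := by
  rw [MvPolynomial.eval_eq]
  refine sum_mem fun m hm ↦ ?_
  have hcoeff := AddSubgroup.subset_closure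
    (MvPolynomial.coeff_mem_coeffs m (MvPolynomial.mem_support_iff.mp hm))
  have := zsmul_mem hcoeff (∏ i ∈ m.support, n i ^ m i)
  rw [zsmul_eq_mul, mul_comm] at this
  exact_mod_cast this

variable {B S : Type*} [CommRing B] [CommRing S] [Algebra B S] [Algebra.IsIntegral B S]

theorem exists_fg_forall_exists_monic {Δ : AddSubgroup S} (hΔ : Δ.FG) :
    ∃ Γ : AddSubgroup B, Γ.FG ∧
      ∀ γ ∈ Δ, ∃ p : B[X], p.Monic ∧ aeval γ p = 0 ∧ ∀ n, p.coeff n ∈ Γ := by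
  classical
  obtain ⟨t, rfl⟩ := hΔ
  let := MvPolynomial.algebraMvPolynomial (σ := S) (R := B) (S := S)
  let generic : MvPolynomial S S := ∑ s ∈ t, .X s * .C s
  obtain ⟨P, hP, hPgeneric⟩ :=
    Algebra.IsIntegral.isIntegral (R := MvPolynomial S B) generic
  refine ⟨AddSubgroup.closure (P.coeffs.biUnion MvPolynomial.coeffs : Finset B), ⟨_, rfl⟩,
    fun γ hγ ↦ ?_⟩
  rw [← Submodule.span_int_eq_addSubgroupClosure, Submodule.mem_toAddSubgroup,
    Submodule.mem_span_finset] at hγ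
  obtain ⟨n, -, rfl⟩ := hγ
  let evalB : MvPolynomial S B →+* B := MvPolynomial.eval fun s ↦ (n s : B)
  let evalS : MvPolynomial S S →+* S := MvPolynomial.eval fun s ↦ (n s : S)
  have heval : evalS.comp (algebraMap (MvPolynomial S B) (MvPolynomial S S)) =
      (algebraMap B S).comp evalB := by
    rw [MvPolynomial.algebraMap_def]
    ext x <;> simp [evalS, evalB]
  have hgeneric : evalS generic = ∑ s ∈ t, n s • s := by simp [evalS, generic]
  refine ⟨P.map evalB, hP.map _, ?_, fun m ↦ ?_⟩
  · rw [aeval_def, eval₂_map, ← heval, ← hgeneric, ← hom_eval₂, hPgeneric, map_zero]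
  · rw [coeff_map]
    by_cases hm : P.coeff m = 0
    · simp [hm]
    · exact AddSubgroup.closure_mono
        (Finset.subset_biUnion_of_mem MvPolynomial.coeffs (coeff_mem_coeffs hm))
        (eval_intCast_mem_closure_coeffs n _)

theorem exists_fg_injOn_of_injOn_comp_algebraMap [IsDomain S] {Δ : AddSubgroup S} (hΔ : Δ.FG) :
    ∃ Γ : AddSubgroup B, Γ.FG ∧ ∀ {k : Type*} [CommRing k] (φ : S →+* k),
      Set.InjOn (φ.comp (algebraMap B S)) Γ → Set.InjOn φ Δ := by
  obtain ⟨Γ, hΓ, hmonic⟩ := exists_fg_forall_exists_monic (B := B) hΔ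
  refine ⟨Γ, hΓ, fun {k} _ φ hinj ↦ ?_⟩
  rw [Set.injOn_iff_map_eq_zero]
  intro γ hγ hφγ
  obtain ⟨p, hp, hpγ, hpΓ⟩ := hmonic γ hγ
  have : Nontrivial B := (algebraMap B S).domain_nontrivial
  by_contra hγ0
  obtain ⟨n, hn, hnφ⟩ := Ideal.exists_coeff_ne_zero_mem_comap_of_root_mem (I := RingHom.ker φ)
    hγ0 hφγ hp.ne_zero hpγ
  exact hn (hinj (hpΓ n) Γ.zero_mem (by simpa using hnφ))

theorem exists_fg_injOn_map_of_injOn_comp_algebraMap [IsDomain S] {Δ : AddSubgroup S[X]}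
    (hΔ : Δ.FG) :
    ∃ Γ : AddSubgroup B, Γ.FG ∧ ∀ {k : Type*} [CommRing k] (φ : S →+* k),
      Set.InjOn (φ.comp (algebraMap B S)) Γ → Set.InjOn (Polynomial.map φ) (Δ : Set S[X]) := by
  obtain ⟨Δ', hΔ', hcoeff⟩ := exists_fg_forall_coeff_mem hΔ
  obtain ⟨Γ, hΓ, hinj⟩ := exists_fg_injOn_of_injOn_comp_algebraMap (B := B) hΔ'
  refine ⟨Γ, hΓ, fun {k} _ φ hφ p hp q hq hpq ↦ Polynomial.ext fun n ↦ ?_⟩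
  exact hinj φ hφ (hcoeff p hp n) (hcoeff q hq n) (by simpa using congr(coeff $hpq n))

theorem exists_ringHom_comp_algebraMap_eq [FaithfulSMul B S] {k : Type*} [Field k] [IsAlgClosed k]
    (c : B →+* k) : ∃ φ : S →+* k, φ.comp (algebraMap B S) = c := by
  have := RingHom.ker_isPrime c
  obtain ⟨Q, _, _⟩ := (inferInstance : Nonempty ((RingHom.ker c).primesOver S))
  algebraize [c.kerLift]
  have : FaithfulSMul (B ⧸ RingHom.ker c) k :=
    (faithfulSMul_iff_algebraMap_injective _ _).mpr c.kerLift_injective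
  have := FaithfulSMul.to_isTorsionFree (B ⧸ RingHom.ker c) (S ⧸ Q)
  let φ : S ⧸ Q →ₐ[B ⧸ RingHom.ker c] k := IsAlgClosed.lift
  refine ⟨φ.toRingHom.comp (Ideal.Quotient.mk Q), RingHom.ext fun b ↦ ?_⟩
  exact φ.commutes (Ideal.Quotient.mk _ b)

end IntegralExtension

theorem splits_map_integralClosure {B K : Type*} [CommRing B] [Field K] [IsAlgClosed K]
    [Algebra B K] {W : B[X]} (hW : W.Monic) :
    (W.map (algebraMap B (integralClosure B K))).Splits := by
  refine .of_splits_map_of_injective (i := algebraMap (integralClosure B K) K)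
    Subtype.val_injective (IsAlgClosed.splits _) fun α hα ↦ ?_
  rw [map_map, ← IsScalarTower.algebraMap_eq] at hα
  exact ⟨⟨α, W, hW, by simpa [eval_map] using (mem_roots'.mp hα).2⟩, rfl⟩

section PoleSum

/-- The rational function `∑ β, e β / (x - β)` attached to a divisor `e` of the affine line. -/
noncomputable def poleSum {F : Type*} [Field F] : (F →₀ ℤ) →ₗ[ℤ] RatFunc F :=
  Finsupp.linearCombination ℤ fun β ↦ (RatFunc.X - RatFunc.C β)⁻¹

/-- The polynomial `∑ α, e α · W / (x - α)`; when `e` is supported on roots of `W`, it is the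
product of `W` and the pole sum of `e`. -/
noncomputable def cofactorSum {S : Type*} [CommRing S] (W : S[X]) : (S →₀ ℤ) →ₗ[ℤ] S[X] :=
  Finsupp.linearCombination ℤ fun α ↦ W /ₘ (X - C α)

variable {F : Type*} [Field F]

theorem ratFunc_algebraMap_X_sub_C (β : F) :
    algebraMap F[X] (RatFunc F) (X - C β) = RatFunc.X - RatFunc.C β := by
  simp

theorem ratFunc_X_sub_C_ne_zero (β : F) : RatFunc.X - RatFunc.C β ≠ 0 := by
  rw [← ratFunc_algebraMap_X_sub_C]
  exact RatFunc.algebraMap_ne_zero (X_sub_C_ne_zero β)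

theorem algebraMap_map_cofactorSum {S : Type*} [CommRing S] (ψ : S →+* F) {W : S[X]} {e : S →₀ ℤ}
    (he : ∀ α ∈ e.support, W.IsRoot α) :
    algebraMap F[X] (RatFunc F) ((cofactorSum W e).map ψ) =
      algebraMap F[X] (RatFunc F) (W.map ψ) * poleSum (e.mapDomain ψ) := by
  rw [poleSum, cofactorSum, Finsupp.linearCombination_mapDomain, Finsupp.linearCombination_apply,
    Finsupp.linearCombination_apply, Finsupp.sum, Finsupp.sum, Polynomial.map_sum, map_sum,
    Finset.mul_sum]
  refine Finset.sum_congr rfl fun α hα ↦ ?_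
  have hcofactor := congr(algebraMap F[X] (RatFunc F)
    (map ψ $(mul_divByMonic_eq_iff_isRoot.mpr (he α hα))))
  rw [Polynomial.map_mul, Polynomial.map_sub, map_X, map_C, map_mul, ratFunc_algebraMap_X_sub_C]
    at hcofactor
  simp only [Function.comp_apply, zsmul_eq_mul, Polynomial.map_mul, Polynomial.map_intCast,
    map_mul, map_intCast, ← hcofactor]
  field_simp [ratFunc_X_sub_C_ne_zero (ψ α)]

theorem isRoot_of_algebraMap_mul_poleSum_eq [CharZero F] {W g : F[X]} {e : F →₀ ℤ}
    (h : algebraMap F[X] (RatFunc F) W * poleSum e = algebraMap F[X] (RatFunc F) g) {β : F}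
    (hβ : β ∈ e.support) : W.IsRoot β := by
  set V := Lagrange.nodal (e.erase β).support id
  have hVroots : ∀ α ∈ (e.erase β).support, V.IsRoot α := fun α hα ↦
    Lagrange.eval_nodal_at_node (v := id) hα
  have hVβ : eval β V ≠ 0 := Lagrange.eval_nodal_not_at_node fun α hα hβα ↦ by
    simp [hβα] at hα
  have hV := algebraMap_map_cofactorSum (RingHom.id F) hVroots
  rw [Polynomial.map_id, Polynomial.map_id, RingHom.coe_id, Finsupp.mapDomain_id] at hV
  rw [← Finsupp.single_add_erase β e, map_add, poleSum, Finsupp.linearCombination_single,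
    ← poleSum, zsmul_eq_mul] at h
  have hpoly : W * (e β • V + (X - C β) * cofactorSum V (e.erase β)) = g * V * (X - C β) := by
    apply RatFunc.algebraMap_injective F
    simp only [map_mul, map_add, map_intCast, hV, ← h, ratFunc_algebraMap_X_sub_C, zsmul_eq_mul]
    field_simp [ratFunc_X_sub_C_ne_zero β]
  have heval := congr(eval β $hpoly)
  simpa [hVβ, Finsupp.mem_support_iff.mp hβ] using heval

theorem exists_cofactorSum_eq_of_map {S : Type*} [CommRing S] [IsDomain S] [CharZero F]
    (φ : S →+* F) {W : S[X]} (hW : W.Monic) (hsplit : W.Splits) {Δ : AddSubgroup S[X]}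
    (hcofactor : ∀ α ∈ W.roots, W /ₘ (X - C α) ∈ Δ) (hinj : Set.InjOn (Polynomial.map φ) Δ)
    {g : S[X]} (hg : g ∈ Δ) {e : F →₀ ℤ}
    (h : algebraMap F[X] (RatFunc F) (W.map φ) * poleSum e =
      algebraMap F[X] (RatFunc F) (g.map φ)) :
    ∃ e' : S →₀ ℤ, (∀ α ∈ e'.support, W.IsRoot α) ∧ cofactorSum W e' = g := by
  have hsupp : e ∈ Finsupp.supported ℤ ℤ (φ '' {α | α ∈ W.roots}) := fun β hβ ↦ by
    have hroot := (mem_roots (hW.map φ).ne_zero).mpr (isRoot_of_algebraMap_mul_poleSum_eq h hβ)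
    rwa [hsplit.roots_map_of_ne_zero (hW.map φ).ne_zero, Multiset.mem_map] at hroot
  rw [← Finsupp.lmapDomain_supported] at hsupp
  obtain ⟨e', he', rfl⟩ := hsupp
  have hroots : ∀ α ∈ e'.support, W.IsRoot α := fun α hα ↦ isRoot_of_mem_roots (he' hα)
  refine ⟨e', hroots, hinj ?_ hg (RatFunc.algebraMap_injective F ?_)⟩
  · rw [cofactorSum, Finsupp.linearCombination_apply]
    exact sum_mem fun α hα ↦ zsmul_mem (hcofactor α (he' hα)) _
  · rw [algebraMap_map_cofactorSum φ hroots, ← h, Finsupp.lmapDomain_apply]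

end PoleSum

section LogDeriv

open scoped Differential

/-- The differential ring structure of a derivation given as a bare function; through it
`Differential.logDeriv` denotes `δ a / a`. -/
abbrev IsDerivationFun.toDifferential {R : Type*} [CommRing R] {δ : R → R}
    (h : IsDerivationFun δ) : Differential R where
  deriv := .mk' (AddMonoidHom.mk' δ h.1).toIntLinearMap fun a b ↦ by
    simp [h.2, mul_comm]

theorem differential_logDeriv_inv {F : Type*} [Field F] [Differential F] (a : F) :
    Differential.logDeriv a⁻¹ = -Differential.logDeriv a := by
  rcases eq_or_ne a 0 with rfl | ha
  · simp
  · rw [inv_eq_one_div, Differential.logDeriv_div _ _ one_ne_zero ha,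
      Differential.logDeriv_one, zero_sub]

theorem differential_logDeriv_zpow {F : Type*} [Field F] [Differential F] (a : F) (n : ℤ) :
    Differential.logDeriv (a ^ n) = n • Differential.logDeriv a := by
  cases n with
  | ofNat n => simp [Differential.logDeriv_pow]
  | negSucc n => rw [zpow_negSucc, differential_logDeriv_inv, Differential.logDeriv_pow,
      negSucc_zsmul, nsmul_eq_mul]

variable {F : Type*} [Field F] [Differential (RatFunc F)]

theorem logDeriv_X_sub_C (hC : ∀ a : F, (RatFunc.C a)′ = 0) (hX : (RatFunc.X : RatFunc F)′ = 1)
    (β : F) : Differential.logDeriv (RatFunc.X - RatFunc.C β) = poleSum (.single β 1) := by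
  simp [Differential.logDeriv, hC, hX, poleSum]

theorem exists_logDeriv_eq_poleSum [IsAlgClosed F] (hC : ∀ a : F, (RatFunc.C a)′ = 0)
    (hX : (RatFunc.X : RatFunc F)′ = 1) (a : RatFunc F) :
    ∃ e : F →₀ ℤ, Differential.logDeriv a = poleSum e := by
  have hmul {a b : RatFunc F} (ha : ∃ e, Differential.logDeriv a = poleSum e)
      (hb : ∃ e, Differential.logDeriv b = poleSum e) :
      ∃ e, Differential.logDeriv (a * b) = poleSum e := by
    rcases eq_or_ne a 0 with rfl | ha0
    · exact ⟨0, by simp⟩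
    rcases eq_or_ne b 0 with rfl | hb0
    · exact ⟨0, by simp⟩
    obtain ⟨⟨e, he⟩, ⟨e', he'⟩⟩ := ha, hb
    exact ⟨e + e', by rw [Differential.logDeriv_mul _ _ ha0 hb0, he, he', map_add]⟩
  have hpoly (p : F[X]) :
      ∃ e, Differential.logDeriv (algebraMap F[X] (RatFunc F) p) = poleSum e := by
    induction IsAlgClosed.splits p using Submonoid.closure_induction with
    | mem p hp =>
      obtain ⟨a, rfl⟩ | ⟨a, rfl⟩ := hp
      · exact ⟨0, by simp [Differential.logDeriv_eq_zero, hC]⟩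
      · exact ⟨.single (-a) 1, by simpa using logDeriv_X_sub_C hC hX (-a)⟩
    | one => exact ⟨0, by simp⟩
    | mul p q _ _ hp hq => simpa using hmul hp hq
  obtain ⟨e, he⟩ := hpoly a.denom
  rw [← a.num_div_denom, div_eq_mul_inv]
  exact hmul (hpoly _) ⟨-e, by rw [differential_logDeriv_inv, he, map_neg]⟩

theorem exists_ne_zero_logDeriv_eq_poleSum (hC : ∀ a : F, (RatFunc.C a)′ = 0)
    (hX : (RatFunc.X : RatFunc F)′ = 1) (e : F →₀ ℤ) :
    ∃ a : RatFunc F, a ≠ 0 ∧ Differential.logDeriv a = poleSum e := by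
  induction e using Finsupp.induction_linear with
  | zero => exact ⟨1, one_ne_zero, by simp⟩
  | add e e' he he' =>
    obtain ⟨⟨a, ha0, ha⟩, ⟨b, hb0, hb⟩⟩ := he, he'
    refine ⟨a * b, mul_ne_zero ha0 hb0, ?_⟩
    rw [Differential.logDeriv_mul _ _ ha0 hb0, ha, hb, map_add]
  | single β n =>
    refine ⟨(RatFunc.X - RatFunc.C β) ^ n, zpow_ne_zero n (ratFunc_X_sub_C_ne_zero β), ?_⟩
    have hsingle : (Finsupp.single β n : F →₀ ℤ) = n • .single β 1 := by simp
    rw [differential_logDeriv_zpow, logDeriv_X_sub_C hC hX, hsingle, map_zsmul]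

end LogDeriv

section Specialization

variable {B : Type*} [CommRing B]

theorem exists_fg_forall_exists_poleSum_eq (K : Type*) [Field K] [IsAlgClosed K] [Algebra B K]
    [FaithfulSMul B K] {W : B[X]} (hW : W.Monic) {Δ : AddSubgroup B[X]} (hΔ : Δ.FG) :
    ∃ Γ : AddSubgroup B, Γ.FG ∧ ∀ (k : Type*) [Field k] [IsAlgClosed k] [CharZero k]
      (c : B →+* k), Set.InjOn c Γ → ∀ g ∈ Δ, ∀ e : k →₀ ℤ,
        algebraMap k[X] (RatFunc k) (W.map c) * poleSum e =
          algebraMap k[X] (RatFunc k) (g.map c) →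
        ∃ e' : K →₀ ℤ, algebraMap K[X] (RatFunc K) (W.map (algebraMap B K)) * poleSum e' =
          algebraMap K[X] (RatFunc K) (g.map (algebraMap B K)) := by
  classical
  obtain ⟨t, rfl⟩ := hΔ
  let S := integralClosure B K
  have : FaithfulSMul B S := .tower_bot B S K
  let toS : B[X] →+* S[X] := mapRingHom (algebraMap B S)
  let cofactors : Finset S[X] := (toS W).roots.toFinset.image fun α ↦ toS W /ₘ (X - C α)
  have hfg : ((AddSubgroup.closure (t : Set B[X])).map (toS : B[X] →+ S[X]) ⊔
      AddSubgroup.closure (cofactors : Set S[X])).FG :=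
    .sup ⟨t.image toS, by simp [AddMonoidHom.map_closure]⟩ ⟨_, rfl⟩
  obtain ⟨Γ, hΓ, hinj⟩ := exists_fg_injOn_map_of_injOn_comp_algebraMap (B := B) hfg
  refine ⟨Γ, hΓ, fun k _ _ _ c hc g hg e he ↦ ?_⟩
  obtain ⟨φ, rfl⟩ := exists_ringHom_comp_algebraMap_eq (S := S) c
  have hcofactor (α : S) (hα : α ∈ (toS W).roots) : toS W /ₘ (X - C α) ∈
      (AddSubgroup.closure (t : Set B[X])).map (toS : B[X] →+ S[X]) ⊔
        AddSubgroup.closure (cofactors : Set S[X]) :=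
    AddSubgroup.mem_sup_right <| AddSubgroup.subset_closure <|
      Finset.mem_image_of_mem _ (Multiset.mem_toFinset.mpr hα)
  rw [← map_map, ← map_map] at he
  obtain ⟨e', he', heg⟩ := exists_cofactorSum_eq_of_map φ (hW.map _)
    (splits_map_integralClosure hW) hcofactor (hinj φ hc)
    (AddSubgroup.mem_sup_left (AddSubgroup.mem_map_of_mem _ hg)) he
  refine ⟨e'.mapDomain (algebraMap S K), ?_⟩
  rw [IsScalarTower.algebraMap_eq B S K, ← map_map, ← map_map]
  exact (algebraMap_map_cofactorSum _ he').symm.trans congr(algebraMap _ _ (map _ $heg))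

theorem exists_monic_mul_eq_algebraMap {f : B[X]} (hf : f.Monic) {A : Type*}
    [CommRing A] [Algebra B[X] A] [IsLocalization.Away f A] {ι : Type*} [Finite ι] (F : ι → A) :
    ∃ W : B[X], W.Monic ∧ ∃ G : ι → B[X], ∀ i,
      algebraMap B[X] A W * F i = algebraMap B[X] A (G i) := by
  obtain ⟨⟨_, n, rfl⟩, hn⟩ :=
    IsLocalization.exist_integer_multiples_of_finite (Submonoid.powers f) F
  choose G hG using hn
  exact ⟨f ^ n, hf.pow n, G, fun i ↦ by rw [hG, Algebra.smul_def]⟩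

theorem algebraMap_map_mul_sum_intCast_mul {A : Type*} [CommRing A] [Algebra B[X] A] {L : Type*}
    [Field L] {ρ : B →+* L} {σ : A →+* RatFunc L}
    (hσ : σ.comp (algebraMap B[X] A) = (algebraMap L[X] (RatFunc L)).comp (mapRingHom ρ))
    {ι : Type*} [Fintype ι] {W : B[X]} {F : ι → A} {G : ι → B[X]}
    (hG : ∀ i, algebraMap B[X] A W * F i = algebraMap B[X] A (G i)) (d : ι → ℤ) :
    algebraMap L[X] (RatFunc L) (W.map ρ) * ∑ i, (d i : RatFunc L) * σ (F i) =
      algebraMap L[X] (RatFunc L) ((∑ i, d i • G i).map ρ) := by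
  have hσ' (p : B[X]) : σ (algebraMap B[X] A p) = algebraMap L[X] (RatFunc L) (p.map ρ) :=
    RingHom.congr_fun hσ p
  simp only [← hσ', map_sum, zsmul_eq_mul, map_mul, map_intCast, ← hG, Finset.mul_sum,
    mul_left_comm]

theorem logIndep_specializes_on_adOpen_general
    {K : Type*} [Field K] [IsAlgClosed K] [Algebra B K]
    (hBK : Function.Injective (algebraMap B K)) {f : B[X]} (hf : f.Monic)
    {τ : Localization.Away f →+* RatFunc K}
    (hτ : τ.comp (algebraMap B[X] (Localization.Away f)) =
      (algebraMap K[X] (RatFunc K)).comp (mapRingHom (algebraMap B K)))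
    {DK : RatFunc K → RatFunc K} (hDK : IsDerivationFun DK)
    (hDKC : ∀ a : K, DK (RatFunc.C a) = 0) (hDKX : DK RatFunc.X = 1)
    {s : ℕ} {F : Fin s → Localization.Away f} (hindep : LogIndep DK fun i ↦ τ (F i)) :
    ∃ Γ : AddSubgroup B, Γ.FG ∧ ∀ (k : Type*) [Field k] [IsAlgClosed k] [CharZero k]
      (c : B →+* k), Set.InjOn c Γ → ∀ σ : Localization.Away f →+* RatFunc k,
        σ.comp (algebraMap B[X] (Localization.Away f)) =
          (algebraMap k[X] (RatFunc k)).comp (mapRingHom c) →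
        ∀ Dk : RatFunc k → RatFunc k, IsDerivationFun Dk →
          (∀ a : k, Dk (RatFunc.C a) = 0) → Dk RatFunc.X = 1 →
          LogIndep Dk fun i ↦ σ (F i) := by
  have := (faithfulSMul_iff_algebraMap_injective B K).mpr hBK
  obtain ⟨W, hW, G, hG⟩ := exists_monic_mul_eq_algebraMap hf F
  have hfg : (AddSubgroup.closure (Set.range G)).FG :=
    (AddSubgroup.fg_iff _).mpr ⟨_, rfl, Set.finite_range G⟩
  obtain ⟨Γ, hΓ, hlift⟩ := exists_fg_forall_exists_poleSum_eq K hW hfg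
  refine ⟨Γ, hΓ, fun k _ _ _ c hc σ hσ Dk hDk hDkC hDkX d a _ hda ↦ ?_⟩
  let := hDk.toDifferential
  let := hDK.toDifferential
  obtain ⟨e, he⟩ := exists_logDeriv_eq_poleSum hDkC hDkX a
  have hmem : ∑ i, d i • G i ∈ AddSubgroup.closure (Set.range G) :=
    sum_mem fun i _ ↦ zsmul_mem (AddSubgroup.subset_closure (Set.mem_range_self i)) _
  obtain ⟨e', he'⟩ := hlift k c hc _ hmem e <| by
    rw [← algebraMap_map_mul_sum_intCast_mul hσ hG, hda.trans he]
  obtain ⟨b, hb0, hb⟩ := exists_ne_zero_logDeriv_eq_poleSum hDKC hDKX e'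
  refine hindep d b hb0 ?_
  rw [← algebraMap_map_mul_sum_intCast_mul hτ hG] at he'
  have hW0 := RatFunc.algebraMap_ne_zero (hW.map (algebraMap B K)).ne_zero
  exact (mul_left_cancel₀ hW0 he').symm.trans hb.symm

end Specialization

/-- **Specialization of logarithmically independent rational functions.**
Let `k` be an algebraically closed field of characteristic zero, `B` a finitely generated
`k`-algebra that is an integral domain, `K` the algebraic closure of the fraction field of `B`,
and `f ∈ B[x]` a monic polynomial.  Let `F 0, …, F (s-1) ∈ B[x]_f ⊆ K(x)` be logarithmically
independent over `(K(x), d/dx)`, the inclusion `B[x]_f ⊆ K(x)` being the map `τ` characterized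
by `τ ∘ (B[x] → B[x]_f) = (K[x] → K(x)) ∘ map (B → K)`, and `d/dx` being the unique derivation
`DK` of `K(x)` killing the constants `K` and sending `x` to `1`.  Then there exists a finitely
generated subgroup `Γ` of the additive group `(B,+)` such that for every `k`-algebra
homomorphism `c : B → k` that is injective on `Γ`, the specializations
`(F 0)^c, …, (F (s-1))^c ∈ k(x)` (under the extension `σ` of `c` with `c(x) = x`) are
logarithmically independent over `(k(x), d/dx)`. -/
theorem logIndep_specializes_on_adOpen
    (k : Type*) [Field k] [IsAlgClosed k] [CharZero k]
    (B : Type*) [CommRing B] [IsDomain B] [Algebra k B] [Algebra.FiniteType k B]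
    (K : Type*) [Field K] [IsAlgClosed K] [CharZero K]
    [Algebra B K] [Algebra.IsAlgebraic B K]
    (hBK : Function.Injective (algebraMap B K))
    [Algebra k K] [IsScalarTower k B K]
    (f : Polynomial B) (hf : f.Monic)
    (τ : Localization.Away f →+* RatFunc K)
    (hτ : τ.comp (algebraMap (Polynomial B) (Localization.Away f)) =
      (algebraMap (Polynomial K) (RatFunc K)).comp
        (Polynomial.mapRingHom (algebraMap B K)))
    (DK : RatFunc K → RatFunc K) (hDK : IsDerivationFun DK)
    (hDKC : ∀ a : K, DK (RatFunc.C a) = 0) (hDKX : DK RatFunc.X = 1)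
    {s : ℕ} (F : Fin s → Localization.Away f)
    (hindep : LogIndep DK (fun i => τ (F i))) :
    ∃ Γ : AddSubgroup B, Γ.FG ∧
      ∀ c : B →ₐ[k] k, Set.InjOn c (Γ : Set B) →
        ∀ σ : Localization.Away f →+* RatFunc k,
          σ.comp (algebraMap (Polynomial B) (Localization.Away f)) =
            (algebraMap (Polynomial k) (RatFunc k)).comp
              (Polynomial.mapRingHom (c : B →+* k)) →
          ∀ Dk : RatFunc k → RatFunc k, IsDerivationFun Dk →
            (∀ a : k, Dk (RatFunc.C a) = 0) → Dk RatFunc.X = 1 →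
            LogIndep Dk (fun i => σ (F i)) := by
  obtain ⟨Γ, hΓ, h⟩ := logIndep_specializes_on_adOpen_general hBK hf hτ hDK hDKC hDKX hindep
  exact ⟨Γ, hΓ, fun c hc ↦ h k c hc⟩
end

section
/- Let k be an algebraically closed field of characteristic zero and let B ⊆ B' be integral domains such that B is a finitely generated k-algebra and B' is a finitely generated B-algebra that is algebraic over B (i.e., Frac(B')/Frac(B) is an algebraic field extension). Let φ : Hom_{k-alg}(B',k) → Hom_{k-alg}(B,k) be the restriction map. Then for every finitely generated subgroup Γ' of the additive group (B',+) there exists a finitely generated subgroup Γ of (B,+) such that, setting U = {c ∈ Hom_{k-alg}(B,k) : c is injective on Γ} and U' = {c' ∈ Hom_{k-alg}(B',k) : c' is injective on Γ'}, one has U ⊆ φ(U') and φ⁻¹(U) ⊆ U'. -/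
/-!
Two facts about `B ⊆ B'` drive the argument.

Every nonzero element of a finitely generated subgroup `Γ' ⊆ B'` divides a nonzero element of one
fixed finitely generated subgroup of `B`, so a homomorphism that kills the former also kills its
multiple in `B`. After clearing denominators `Γ'` is spanned by integral elements `vᵢ`, and then the
generic element `∑ vᵢ Xᵢ` is a root of a monic polynomial over `B[X₁, …, Xₙ]`. Specializing `Xᵢ` to
integers gives, for each element of `Γ'`, a monic equation whose coefficients are integer
combinations of the finitely many coefficients of the generic one; its trailing coefficient is the
required multiple.

If multiplication by `r ≠ 0` makes generators of `B'` integral, then `B'` becomes integral after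
inverting `r`, and lying over extends each homomorphism `c : B → K` with `c r ≠ 0` to `B'`.
-/

open Polynomial

section BoundedCoefficients

theorem eval_algebraMap_mem_span_coeffs {σ R B : Type*} [CommSemiring R] [CommSemiring B]
    [Algebra R B] (p : MvPolynomial σ B) (a : σ → R) :
    p.eval (fun i ↦ algebraMap R B (a i)) ∈ Submodule.span R (p.coeffs : Set B) := by
  rw [MvPolynomial.eval_eq]
  refine Submodule.sum_mem _ fun d hd ↦ ?_
  rw [mul_comm]
  simp_rw [← map_pow, ← map_prod, ← Algebra.smul_def]
  exact Submodule.smul_mem _ _ <| Submodule.subset_span <|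
    MvPolynomial.coeff_mem_coeffs d (MvPolynomial.mem_support_iff.1 hd)

variable {B B' : Type*} [CommRing B] [CommRing B'] [Algebra B B']

theorem isIntegralElem_map_sum_C_mul_X {ι : Type*} [Fintype ι] {v : ι → B'}
    (hv : ∀ i, IsIntegral B (v i)) :
    (MvPolynomial.map (algebraMap B B')).IsIntegralElem
      (∑ i, MvPolynomial.C (v i) * MvPolynomial.X i : MvPolynomial ι B') := by
  let := MvPolynomial.algebraMvPolynomial (σ := ι) (R := B) (S := B')
  have hX (i : ι) : algebraMap (MvPolynomial ι B) (MvPolynomial ι B') (.X i) = .X i :=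
    MvPolynomial.map_X _ i
  refine IsIntegral.sum (R := MvPolynomial ι B) _ fun i _ ↦ .mul ?_ (hX i ▸ isIntegral_algebraMap)
  exact ((hv i).map (Algebra.ofId B' (MvPolynomial ι B'))).tower_top

variable {R : Type*} [CommRing R] [Algebra R B] [Algebra R B'] [IsScalarTower R B B']

theorem aeval_sum_smul_map_eval_eq_zero {ι : Type*} [Fintype ι] {v : ι → B'}
    {P : (MvPolynomial ι B)[X]}
    (hP : P.eval₂ (MvPolynomial.map (algebraMap B B'))
      (∑ i, MvPolynomial.C (v i) * MvPolynomial.X i) = 0) (a : ι → R) :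
    aeval (∑ i, a i • v i) (P.map (MvPolynomial.eval fun i ↦ algebraMap R B (a i))) = 0 := by
  have hcomp : (MvPolynomial.eval fun i ↦ algebraMap R B' (a i)).comp
      (MvPolynomial.map (algebraMap B B')) =
      (algebraMap B B').comp (MvPolynomial.eval fun i ↦ algebraMap R B (a i)) := by
    ext i <;> simp [← IsScalarTower.algebraMap_apply]
  have hspec := congrArg (MvPolynomial.eval fun i ↦ algebraMap R B' (a i)) hP
  rw [hom_eval₂, hcomp] at hspec
  simpa [aeval_def, eval₂_map, Algebra.smul_def, mul_comm] using hspec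

theorem exists_fg_forall_exists_monic_coeff_mem {G : Submodule R B'} (hG : G.FG)
    (hint : ∀ g ∈ G, IsIntegral B g) :
    ∃ N : Submodule R B, N.FG ∧
      ∀ g ∈ G, ∃ p : B[X], p.Monic ∧ (∀ i, p.coeff i ∈ N) ∧ aeval g p = 0 := by
  classical
  obtain ⟨n, v, rfl⟩ := Submodule.fg_iff_exists_fin_generating_family.1 hG
  obtain ⟨P, hP, hroot⟩ := isIntegralElem_map_sum_C_mul_X
    fun i ↦ hint (v i) (Submodule.subset_span ⟨i, rfl⟩)
  refine ⟨Submodule.span R (P.coeffs.biUnion MvPolynomial.coeffs),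
    Submodule.fg_span (Finset.finite_toSet _), fun g hg ↦ ?_⟩
  obtain ⟨a, rfl⟩ := (Submodule.mem_span_range_iff_exists_fun R).1 hg
  refine ⟨P.map (MvPolynomial.eval fun i ↦ algebraMap R B (a i)), hP.map _, fun i ↦ ?_,
    aeval_sum_smul_map_eval_eq_zero hroot a⟩
  rw [coeff_map]
  by_cases hi : P.coeff i = 0
  · simp [hi]
  · exact Submodule.span_mono (mod_cast Finset.subset_biUnion_of_mem _ (coeff_mem_coeffs hi))
      (eval_algebraMap_mem_span_coeffs _ a)

end BoundedCoefficients

section Divisibility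

theorem dvd_algebraMap_trailingCoeff {B B' : Type*} [CommSemiring B] [CommRing B']
    [NoZeroDivisors B'] [Algebra B B'] {p : B[X]} {x : B'} (hx : x ≠ 0) (hp : aeval x p = 0) :
    x ∣ algebraMap B B' p.trailingCoeff := by
  obtain ⟨q, hq⟩ := X_pow_dvd_iff.2 fun d ↦ coeff_eq_zero_of_lt_natTrailingDegree (p := p)
  have hroot : (q.map (algebraMap B B')).IsRoot x := by
    rw [hq, map_mul, map_pow, aeval_X] at hp
    rw [IsRoot, eval_map_algebraMap]
    exact (mul_eq_zero.1 hp).resolve_left (pow_ne_zero _ hx)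
  have hcoeff : p.trailingCoeff = q.coeff 0 :=
    (congrArg (coeff · p.natTrailingDegree) hq).trans (by simpa using coeff_X_pow_mul q _ 0)
  simpa [hcoeff] using hroot.dvd_coeff_zero

theorem exists_fg_forall_exists_dvd_algebraMap {R B B' : Type*} [CommRing R] [CommRing B]
    [CommRing B'] [IsDomain B'] [Algebra R B] [Algebra B B'] [Algebra R B']
    [IsScalarTower R B B'] [FaithfulSMul B B'] [Algebra.IsAlgebraic B B']
    {G : Submodule R B'} (hG : G.FG) :
    ∃ N : Submodule R B, N.FG ∧
      ∀ g ∈ G, g ≠ 0 → ∃ n ∈ N, n ≠ 0 ∧ g ∣ algebraMap B B' n := by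
  have : IsDomain B := .of_faithfulSMul B B'
  obtain ⟨s, rfl⟩ := hG
  obtain ⟨r, hr, hint⟩ := Algebra.IsAlgebraic.exists_integral_multiples B s
  have hr' : algebraMap B B' r ≠ 0 := by simpa using hr
  let mulR : B' →ₗ[R] B' := LinearMap.mulLeft R (algebraMap B B' r)
  have hle : (Submodule.span R s).map mulR ≤
      (integralClosure B B').toSubmodule.restrictScalars R := by
    rw [Submodule.map_span, Submodule.span_le]
    rintro _ ⟨x, hx, rfl⟩
    simpa [mulR, ← Algebra.smul_def] using! hint x hx
  obtain ⟨N, hN, hmonic⟩ := exists_fg_forall_exists_monic_coeff_mem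
    ((Submodule.fg_span s.finite_toSet).map mulR) fun g hg ↦ hle hg
  refine ⟨N, hN, fun g hg hg0 ↦ ?_⟩
  obtain ⟨p, hp, hpN, hroot⟩ := hmonic _ (Submodule.mem_map_of_mem hg)
  exact ⟨p.trailingCoeff, hpN _, trailingCoeff_nonzero_iff_nonzero.2 hp.ne_zero,
    (dvd_mul_left g _).trans (dvd_algebraMap_trailingCoeff (mul_ne_zero hr' hg0) hroot)⟩

end Divisibility

section Extension

theorem nonempty_algHom_of_isIntegral (A A' K : Type*) [CommRing A] [CommRing A'] [Field K]
    [IsAlgClosed K] [Algebra A A'] [Algebra.IsIntegral A A'] [FaithfulSMul A A'] [Algebra A K] :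
    Nonempty (A' →ₐ[A] K) := by
  let P := RingHom.ker (algebraMap A K)
  have : P.IsPrime := RingHom.ker_isPrime _
  obtain ⟨Q, _, _⟩ := (inferInstance : Nonempty (P.primesOver A'))
  let : Algebra (A ⧸ P) K := (RingHom.kerLift (algebraMap A K)).toAlgebra
  have : IsScalarTower A (A ⧸ P) K := .of_algebraMap_eq fun _ ↦ rfl
  have : Module.IsTorsionFree (A ⧸ P) K :=
    Module.isTorsionFree_iff_algebraMap_injective.2 (RingHom.kerLift_injective _)
  have : Module.IsTorsionFree (A ⧸ P) (A' ⧸ Q) :=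
    Module.isTorsionFree_iff_faithfulSMul.2 inferInstance
  exact ⟨((IsAlgClosed.lift : A' ⧸ Q →ₐ[A ⧸ P] K).restrictScalars A).comp
    (Ideal.Quotient.mkₐ A Q)⟩

theorem isIntegral_of_isUnit_of_isIntegral_smul {B A L : Type*} [CommRing B] [CommRing A]
    [CommRing L] [Algebra B A] [Algebra A L] [Algebra B L] [IsScalarTower B A L] {r : B} {x : L}
    (hr : IsUnit (algebraMap B A r)) (hx : IsIntegral B (r • x)) : IsIntegral A x := by
  obtain ⟨u, hu⟩ := hr
  have hux : IsIntegral A ((u : A) • x) := by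
    simpa [hu] using! hx.tower_top (A := A)
  simpa [smul_smul] using hux.smul (↑u⁻¹ : A)

theorem algebraMap_localizationAway_injective {B L : Type*} (A : Type*) [CommRing B] [CommRing A]
    [CommRing L] [Algebra B A] [Algebra A L] [Algebra B L] [IsScalarTower B A L] [FaithfulSMul B L]
    (r : B) [IsLocalization.Away r A] : Function.Injective (algebraMap A L) :=
  IsLocalization.injective_of_map_algebraMap_zero (M := .powers r) A (algebraMap A L) fun b hb ↦ by
    rw [← IsScalarTower.algebraMap_apply, FaithfulSMul.algebraMap_eq_zero_iff] at hb
    rw [hb, map_zero]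

theorem nonempty_algHom_of_isIntegral_smul {B B' K : Type*} [CommRing B] [CommRing B']
    [IsDomain B'] [Field K] [IsAlgClosed K] [Algebra B B'] [FaithfulSMul B B'] [Algebra B K]
    {s : Set B'} (hs : Algebra.adjoin B s = ⊤) {r : B} (hint : ∀ x ∈ s, IsIntegral B (r • x))
    (hr : algebraMap B K r ≠ 0) : Nonempty (B' →ₐ[B] K) := by
  let A := Localization.Away r
  let L := FractionRing B'
  have : FaithfulSMul B L := .trans B B' L
  have hrL : algebraMap B L r ≠ 0 := by
    rw [ne_eq, FaithfulSMul.algebraMap_eq_zero_iff]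
    rintro rfl
    exact hr (map_zero _)
  let : Algebra A L := (IsLocalization.Away.lift r hrL.isUnit : A →+* L).toAlgebra
  let : Algebra A K := (IsLocalization.Away.lift r hr.isUnit : A →+* K).toAlgebra
  have : IsScalarTower B A L := .of_algebraMap_eq fun b ↦ (IsLocalization.Away.lift_eq r _ b).symm
  have : IsScalarTower B A K := .of_algebraMap_eq fun b ↦ (IsLocalization.Away.lift_eq r _ b).symm
  let C := integralClosure A L
  have : FaithfulSMul A L := (faithfulSMul_iff_algebraMap_injective A L).2
    (algebraMap_localizationAway_injective A r)
  have : FaithfulSMul A C := .tower_bot A C L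
  have hC : Algebra.adjoin B s ≤ (C.restrictScalars B).comap (IsScalarTower.toAlgHom B B' L) :=
    Algebra.adjoin_le fun x hx ↦ isIntegral_of_isUnit_of_isIntegral_smul
      (IsLocalization.Away.algebraMap_isUnit r)
      (by simpa [Algebra.smul_def, IsScalarTower.algebraMap_apply B B' L]
        using! (hint x hx).algebraMap (B := L))
  obtain ⟨f⟩ := nonempty_algHom_of_isIntegral A C K
  exact ⟨(f.restrictScalars B).comp <| (IsScalarTower.toAlgHom B B' L).codRestrict
    (C.restrictScalars B) fun _ ↦ hC (hs ▸ Algebra.mem_top)⟩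

theorem exists_ne_zero_forall_exists_comp_toAlgHom_eq (k B B' K : Type*) [CommRing k] [CommRing B]
    [CommRing B'] [IsDomain B'] [Field K] [IsAlgClosed K] [Algebra k B] [Algebra k B']
    [Algebra k K] [Algebra B B'] [IsScalarTower k B B'] [FaithfulSMul B B']
    [Algebra.FiniteType B B'] [Algebra.IsAlgebraic B B'] :
    ∃ r : B, r ≠ 0 ∧ ∀ c : B →ₐ[k] K, c r ≠ 0 →
      ∃ c' : B' →ₐ[k] K, c'.comp (IsScalarTower.toAlgHom k B B') = c := by
  have : IsDomain B := .of_faithfulSMul B B'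
  obtain ⟨s, hs⟩ := Algebra.FiniteType.out (R := B) (A := B')
  obtain ⟨r, hr, hint⟩ := Algebra.IsAlgebraic.exists_integral_multiples B s
  refine ⟨r, hr, fun c hc ↦ ?_⟩
  let : Algebra B K := c.toRingHom.toAlgebra
  have : IsScalarTower k B K := .of_algebraMap_eq fun x ↦ (c.commutes x).symm
  obtain ⟨f⟩ := nonempty_algHom_of_isIntegral_smul hs hint hc
  exact ⟨f.restrictScalars k, AlgHom.ext f.commutes⟩

end Extension

section General

variable {k K : Type*} [CommRing k] [Field K] [IsAlgClosed K] [Algebra k K]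
  {B B' : Type*} [CommRing B] [CommRing B'] [IsDomain B'] [Algebra k B] [Algebra k B']
  [Algebra B B'] [IsScalarTower k B B']

theorem adOpen_lift_along_algebraic_extension_general
    (hinj : Function.Injective (algebraMap B B'))
    [Algebra.FiniteType B B'] [Algebra.IsAlgebraic B B']
    (Γ' : AddSubgroup B') (hΓ' : Γ'.FG) :
    ∃ Γ : AddSubgroup B, Γ.FG ∧
      (∀ c : B →ₐ[k] K, Set.InjOn c (Γ : Set B) →
        ∃ c' : B' →ₐ[k] K, Set.InjOn c' (Γ' : Set B') ∧
          c'.comp (IsScalarTower.toAlgHom k B B') = c) ∧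
      (∀ c' : B' →ₐ[k] K,
        Set.InjOn (c'.comp (IsScalarTower.toAlgHom k B B')) (Γ : Set B) →
        Set.InjOn c' (Γ' : Set B')) := by
  have : FaithfulSMul B B' := (faithfulSMul_iff_algebraMap_injective B B').2 hinj
  obtain ⟨N, hN, hdvd⟩ := exists_fg_forall_exists_dvd_algebraMap (R := ℤ) (B := B)
    (G := Γ'.toIntSubmodule) ((Submodule.fg_iff_addSubgroup_fg _).2 hΓ')
  obtain ⟨r, hr, hext⟩ := exists_ne_zero_forall_exists_comp_toAlgHom_eq k B B' K
  let M := N ⊔ Submodule.span ℤ {r}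
  have hlift (c' : B' →ₐ[k] K)
      (hc' : Set.InjOn (c'.comp (IsScalarTower.toAlgHom k B B')) M.toAddSubgroup) :
      Set.InjOn c' Γ' := by
    refine (Set.injOn_iff_map_eq_zero c' Γ').2 fun g hg hg0 ↦ by_contra fun hne ↦ ?_
    obtain ⟨n, hn, hn0, hgn⟩ := hdvd g hg hne
    have hc'n : c' (algebraMap B B' n) = 0 := zero_dvd_iff.1 (hg0 ▸ map_dvd c' hgn)
    exact hn0 <| (Set.injOn_iff_map_eq_zero _ M.toAddSubgroup).1 hc' n
      (Submodule.mem_sup_left hn) hc'n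
  have hM : M.FG := hN.sup (Submodule.fg_span_singleton r)
  refine ⟨M.toAddSubgroup, (Submodule.fg_iff_addSubgroup_fg M).1 hM, fun c hc ↦ ?_, hlift⟩
  have hcr : c r ≠ 0 := fun h ↦ hr <| (Set.injOn_iff_map_eq_zero c M.toAddSubgroup).1 hc r
    (Submodule.mem_sup_right (Submodule.mem_span_singleton_self r)) h
  obtain ⟨c', rfl⟩ := hext c hcr
  exact ⟨c', hlift c' hc, rfl⟩

end General

/-- **Lifting of ad-open sets along algebraic extensions.**
Let `k` be an algebraically closed field of characteristic zero and let `B ⊆ B'` be integral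
domains such that `B` is a finitely generated `k`-algebra and `B'` is a finitely generated
`B`-algebra that is algebraic over `B` (i.e. every element of `B'` is algebraic over `B`,
equivalently `Frac(B')/Frac(B)` is an algebraic field extension).  Let
`φ : Hom_{k-alg}(B',k) → Hom_{k-alg}(B,k)` be the restriction map.  Then for every finitely
generated subgroup `Γ'` of `(B',+)` there exists a finitely generated subgroup `Γ` of `(B,+)`
such that, with `U = {c : c injective on Γ}` and `U' = {c' : c' injective on Γ'}`, one has
`U ⊆ φ(U')` and `φ⁻¹(U) ⊆ U'`. -/
theorem adOpen_lift_along_algebraic_extension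
    (k : Type*) [Field k] [IsAlgClosed k] [CharZero k]
    (B : Type*) [CommRing B] [IsDomain B] [Algebra k B] [Algebra.FiniteType k B]
    (B' : Type*) [CommRing B'] [IsDomain B'] [Algebra k B'] [Algebra B B']
    [IsScalarTower k B B']
    (hinj : Function.Injective (algebraMap B B'))
    [Algebra.FiniteType B B'] [Algebra.IsAlgebraic B B']
    (Γ' : AddSubgroup B') (hΓ' : Γ'.FG) :
    ∃ Γ : AddSubgroup B, Γ.FG ∧
      (∀ c : B →ₐ[k] k, Set.InjOn c (Γ : Set B) →
        ∃ c' : B' →ₐ[k] k, Set.InjOn c' (Γ' : Set B') ∧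
          c'.comp (IsScalarTower.toAlgHom k B B') = c) ∧
      (∀ c' : B' →ₐ[k] k,
        Set.InjOn (c'.comp (IsScalarTower.toAlgHom k B B')) (Γ : Set B) →
        Set.InjOn c' (Γ' : Set B')) :=
  adOpen_lift_along_algebraic_extension_general hinj Γ' hΓ'
end

section
/- Let k₀ be a field of characteristic zero, B₀ a finitely generated k₀-algebra that is an integral domain, and B₀' an integral domain containing B₀ such that B₀' is algebraic over B₀ and a finitely generated B₀-algebra. Then there exists a nonzero b ∈ B₀ such that for every prime ideal 𝔭 of B₀ with b ∉ 𝔭: (i) there exists a prime ideal of B₀' lying over 𝔭; (ii) the fibre B₀' ⊗_{B₀} κ(𝔭) is a κ(𝔭)-vector space of dimension [Frac(B₀') : Frac(B₀)]; and (iii) every prime ideal 𝔭' of B₀' lying over 𝔭 satisfies [κ(𝔭') : κ(𝔭)] ≤ [Frac(B₀') : Frac(B₀)]. -/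
noncomputable section

/-- A ring map `f : R →+* S` is *algebraic* if every element of `S` satisfies a nonzero
(not necessarily monic) univariate polynomial over `R`; for an inclusion of integral domains
this is equivalent to `Frac(S)/Frac(R)` being an algebraic field extension. -/
def RingHom.IsAlgebraicOver {R S : Type*} [CommRing R] [CommRing S] (f : R →+* S) : Prop :=
  ∀ s : S, ∃ P : Polynomial R, P ≠ 0 ∧ Polynomial.eval₂ f s P = 0

/-- The residue field `κ(p)` at a prime ideal `p`, realized as the fraction field of `R ⧸ p`. -/
abbrev resField (R : Type*) [CommRing R] (p : Ideal R) : Type _ :=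
  FractionRing (R ⧸ p)

/-- The canonical map `R → κ(p)`. -/
def resCanon (R : Type*) [CommRing R] (p : Ideal R) : R →+* resField R p :=
  (algebraMap (R ⧸ p) (resField R p)).comp (Ideal.Quotient.mk p)

/-- The map on residue fields `κ(p) → κ(q)` induced by `f : R →+* S` when the prime `q` of `S`
lies over the prime `p` of `R`. -/
def resFieldMap {R S : Type*} [CommRing R] [CommRing S] (f : R →+* S)
    (p : Ideal R) (q : Ideal S) [p.IsPrime] [q.IsPrime] (h : q.comap f = p) :
    resField R p →+* resField S q :=
  IsFractionRing.lift
    (g := (algebraMap (S ⧸ q) (resField S q)).comp (Ideal.quotientMap q f h.ge))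
    ((IsFractionRing.injective (S ⧸ q) (resField S q)).comp
      (Ideal.quotientMap_injective' (H := h.ge) h.le))

/-- The residue degree `[κ(q) : κ(p)]` (as a cardinal), for `q` a prime of `S` lying over
the prime `p` of `R`; junk value `0` if `q` does not lie over `p`. -/
def resRank {R S : Type*} [CommRing R] [CommRing S] (f : R →+* S)
    (p : PrimeSpectrum R) (q : PrimeSpectrum S) : Cardinal :=
  letI := Classical.dec (q.asIdeal.comap f = p.asIdeal)
  if h : q.asIdeal.comap f = p.asIdeal then
    letI := (resFieldMap f p.asIdeal q.asIdeal h).toAlgebra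
    Module.rank (resField R p.asIdeal) (resField S q.asIdeal)
  else 0

/-- The degree `[Frac(S) : Frac(R)]` (as a cardinal) of the extension of fraction fields
induced by an injective map `f : R →+* S` of integral domains; junk value `0` if `f` is not
injective. -/
def fracRank {R S : Type*} [CommRing R] [IsDomain R] [CommRing S] [IsDomain S]
    (f : R →+* S) : Cardinal :=
  letI := Classical.dec (Function.Injective f)
  if hf : Function.Injective f then
    letI := (IsFractionRing.lift (g := (algebraMap S (FractionRing S)).comp f)
      ((IsFractionRing.injective S (FractionRing S)).comp hf) :
        FractionRing R →+* FractionRing S).toAlgebra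
    Module.rank (FractionRing R) (FractionRing S)
  else 0

/-- The basic Hilbert set `H(S/R)`: the set of primes `p` of `R` such that there is exactly
one prime `q` of `S` lying over `p`, and this `q` satisfies `[κ(q) : κ(p)] = [Frac(S) : Frac(R)]`. -/
def basicHilbertSet {R S : Type*} [CommRing R] [IsDomain R] [CommRing S] [IsDomain S]
    (f : R →+* S) : Set (PrimeSpectrum R) :=
  {p | (∃! q : PrimeSpectrum S, q.asIdeal.comap f = p.asIdeal) ∧
    ∀ q : PrimeSpectrum S, q.asIdeal.comap f = p.asIdeal → resRank f p q = fracRank f}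

/-- The data of an integral domain extension `R ⊆ S` which is of finite type and algebraic
over `R` (so that `Frac(S)/Frac(R)` is a finite extension). -/
structure AlgExt (R : Type u) [CommRing R] : Type (u + 1) where
  /-- the extension ring -/
  carrier : Type u
  [commRing : CommRing carrier]
  [isDomain : IsDomain carrier]
  /-- the inclusion map -/
  hom : R →+* carrier
  inj : Function.Injective hom
  ft : hom.FiniteType
  alg : hom.IsAlgebraicOver

attribute [instance] AlgExt.commRing AlgExt.isDomain

/-- A Hilbert subset of `Spec R`: a finite intersection of basic Hilbert sets `H(Bᵢ/R)`
with a basic Zariski open set `D(b)`, `b ≠ 0`. -/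
def IsHilbertSet {R : Type u} [CommRing R] [IsDomain R] (H : Set (PrimeSpectrum R)) : Prop :=
  ∃ (r : ℕ) (E : Fin r → AlgExt R) (b : R), b ≠ 0 ∧
    H = (⋂ i, basicHilbertSet (E i).hom) ∩ {p | b ∉ p.asIdeal}

/-- The set of primes `p` of `R` at which the reduction of the polynomial `g` modulo `p` is
irreducible in `κ(p)[y]`. -/
def irreduciblePolySet {R : Type*} [CommRing R] (g : Polynomial R) :
    Set (PrimeSpectrum R) :=
  {p | Irreducible (g.map (resCanon R p.asIdeal))}

end

noncomputable section

/-- The dimension (as a cardinal) of the fibre `S ⊗_R κ(p)` as a `κ(p)`-vector space. -/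
def fibreRank {R S : Type*} [CommRing R] [CommRing S] (f : R →+* S)
    (p : PrimeSpectrum R) : Cardinal :=
  letI : Algebra R S := f.toAlgebra
  letI : Algebra R (resField R p.asIdeal) := (resCanon R p.asIdeal).toAlgebra
  Module.rank (resField R p.asIdeal) (TensorProduct R (resField R p.asIdeal) S)

/-!
The theorem is generic freeness with the rank identified. Write `R = B₀`, `S = B₀'`. Multiplying
finitely many generators of `S` by one nonzero `a : R` makes them integral, so `S` is, up to powers
of `a`, a finite `R`-module; a maximal independent family in that module has torsion cokernel,
killed by one nonzero `c : R`. Hence `S_b` is finite free over `R_b` for `b = a * c`, of rank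
`[Frac S : Frac R]`, and for `b ∉ 𝔭` the fibre at `𝔭` is a base change of `S_b`. The residue field
of a prime over `𝔭` is a quotient of the fibre: the image of the fibre is a domain algebraic over
`κ(𝔭)`, thus already a field.
-/

section GenericFreeness

open scoped Pointwise in
theorem exists_finite_subalgebra_pow_smul_mem (R S : Type*) [CommRing R] [NoZeroDivisors R]
    [CommRing S] [Algebra R S] [Algebra.FiniteType R S] [Algebra.IsAlgebraic R S] :
    ∃ T : Subalgebra R S, Module.Finite R T ∧
      ∃ a : R, a ≠ 0 ∧ ∀ x : S, ∃ n : ℕ, a ^ n • x ∈ T := by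
  obtain ⟨G, hG⟩ := Algebra.FiniteType.out (R := R) (A := S)
  obtain ⟨a, ha, hint⟩ := Algebra.IsAlgebraic.exists_integral_multiples R G
  have hadjoin (x : S) : x ∈ Algebra.adjoin R (G : Set S) := hG ▸ Algebra.mem_top
  refine ⟨Algebra.adjoin R (a • (G : Set S)), ?_, a, ha, fun x ↦ ?_⟩
  · refine Module.Finite.iff_fg.mpr (fg_adjoin_of_finite G.finite_toSet.smul_set ?_)
    rintro _ ⟨z, hz, rfl⟩
    exact hint z hz
  · obtain ⟨n, hn⟩ := Algebra.pow_smul_mem_of_smul_subset_of_mem_adjoin a (G : Set S) _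
      Algebra.subset_adjoin (hadjoin x) (Subalgebra.algebraMap_mem _ a)
    exact ⟨n, hn n le_rfl⟩

theorem exists_injective_smul_mem_range (R M : Type*) [CommRing R] [IsDomain R]
    [AddCommGroup M] [Module R M] [Module.Finite R M] :
    ∃ (n : ℕ) (g : (Fin n → R) →ₗ[R] M), Function.Injective g ∧
      ∃ c : R, c ≠ 0 ∧ ∀ x : M, c • x ∈ LinearMap.range g := by
  obtain ⟨v, hv⟩ := exists_linearIndependent_of_le_finrank (R := R) (M := M) le_rfl
  let g := Fintype.linearCombination R v
  have hg : Function.Injective g := hv.fintypeLinearCombination_injective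
  have hquot : Module.finrank R (M ⧸ LinearMap.range g) = 0 := by
    have hadd := Submodule.finrank_quotient_add_finrank (LinearMap.range g)
    rw [LinearMap.finrank_range_of_inj hg, Module.finrank_fin_fun] at hadd
    lia
  obtain ⟨c, hc, hc0⟩ := Submodule.annihilator_top_inter_nonZeroDivisors
    (Module.finrank_eq_zero_iff_isTorsion.mp hquot)
  refine ⟨_, g, hg, c, nonZeroDivisors.ne_zero hc0, fun x ↦ ?_⟩
  rw [← Submodule.Quotient.mk_eq_zero, Submodule.Quotient.mk_smul]
  exact Submodule.mem_annihilator.mp hc _ Submodule.mem_top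

theorem isLocalizedModule_away_mkLinearMap_comp {R M N : Type*} [CommRing R] [AddCommGroup M]
    [Module R M] [AddCommGroup N] [Module R N] {g : N →ₗ[R] M} (hg : Function.Injective g) {b : R}
    (hb : ∀ x : M, ∃ n : ℕ, b ^ n • x ∈ LinearMap.range g) :
    IsLocalizedModule.Away b (LocalizedModule.mkLinearMap (.powers b) M ∘ₗ g) := by
  let mk := LocalizedModule.mkLinearMap (.powers b) M
  refine .mk_of_addCommGroup ?_ ?_ ?_
  · exact IsLocalizedModule.map_units mk ⟨b, Submonoid.mem_powers b⟩
  · intro x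
    obtain ⟨k, m, hm⟩ := IsLocalizedModule.Away.surj mk b x
    obtain ⟨n, y, hy⟩ := hb m
    exact ⟨n + k, y, by simp [pow_add, mul_smul, hm, hy, mk]⟩
  · intro y hy
    obtain ⟨⟨_, n, rfl⟩, hn⟩ := (IsLocalizedModule.eq_zero_iff (.powers b) mk).mp hy
    exact ⟨n, hg (by rwa [map_smul, map_zero])⟩

theorem exists_free_finite_localizedModule_away (R S : Type*) [CommRing R] [IsDomain R]
    [CommRing S] [Algebra R S] [Algebra.FiniteType R S] [Algebra.IsAlgebraic R S] :
    ∃ b : R, b ≠ 0 ∧ Module.Free (Localization.Away b) (LocalizedModule.Away b S) ∧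
      Module.Finite (Localization.Away b) (LocalizedModule.Away b S) := by
  obtain ⟨T, _, a, ha, haT⟩ := exists_finite_subalgebra_pow_smul_mem R S
  obtain ⟨n, g, hg, c, hc, hcg⟩ := exists_injective_smul_mem_range R T
  let h : (Fin n → R) →ₗ[R] S := T.val.toLinearMap ∘ₗ g
  have hmem (x : S) : ∃ k : ℕ, (a * c) ^ k • x ∈ LinearMap.range h := by
    obtain ⟨k, hk⟩ := haT x
    obtain ⟨y, hy⟩ := hcg ⟨a ^ k • x, hk⟩
    have hhy : h y = c • a ^ k • x := congrArg T.val hy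
    refine ⟨k + 1, (a * c ^ k) • y, ?_⟩
    rw [map_smul, hhy, smul_smul, smul_smul]
    congr 1
    ring
  let φ := LocalizedModule.mkLinearMap (.powers (a * c)) S ∘ₗ h
  have : IsLocalizedModule.Away (a * c) φ :=
    isLocalizedModule_away_mkLinearMap_comp (Subtype.val_injective.comp hg) hmem
  exact ⟨a * c, mul_ne_zero ha hc, Module.free_of_isLocalizedModule (.powers (a * c)) φ,
    Module.Finite.of_isLocalizedModule (.powers (a * c)) φ⟩

end GenericFreeness

section BaseChange

open TensorProduct

variable {R : Type u} {M : Type v} [CommRing R] [AddCommGroup M] [Module R M] {b : R}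

theorem rank_localizedModule_away [IsDomain R] (hb : b ≠ 0) :
    Module.rank (Localization.Away b) (LocalizedModule.Away b M) =
      Cardinal.lift.{u} (Module.rank R M) := by
  have hle := powers_le_nonZeroDivisors_of_noZeroDivisors hb
  rw [IsLocalization.rank_eq _ _ hle]
  apply Cardinal.lift_injective.{v}
  rw [IsLocalizedModule.lift_rank_eq _ (LocalizedModule.mkLinearMap (.powers b) M) hle]
  simp

variable (F : Type w) [CommRing F] [Algebra R F]

/-- Transitivity of base change along `R → R_b → F`: the base change of `M_b` to an `R_b`-algebra
`F` is the base change of `M`. It transports freeness of `M_b` to the fibres of `M` over `D(b)`. -/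
def tensorAwayEquiv [Algebra (Localization.Away b) F] [IsScalarTower R (Localization.Away b) F] :
    F ⊗[Localization.Away b] LocalizedModule.Away b M ≃ₗ[F] F ⊗[R] M :=
  (AlgebraTensorModule.congr (.refl F F)
      (IsLocalizedModule.isBaseChange (.powers b) (Localization.Away b)
        (LocalizedModule.mkLinearMap (.powers b) M)).equiv).symm ≪≫ₗ
    AlgebraTensorModule.cancelBaseChange R (Localization.Away b) F F M

theorem finite_and_rank_tensorProduct_of_isUnit [IsDomain R] [Nontrivial F]
    [Module.Free (Localization.Away b) (LocalizedModule.Away b M)]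
    [Module.Finite (Localization.Away b) (LocalizedModule.Away b M)]
    (hbF : IsUnit (algebraMap R F b)) :
    Module.Finite F (F ⊗[R] M) ∧
      Module.rank F (F ⊗[R] M) = Cardinal.lift.{w} (Module.rank R M) := by
  let : Algebra (Localization.Away b) F := (IsLocalization.Away.lift b hbF).toAlgebra
  have : IsScalarTower R (Localization.Away b) F := .of_algebraMap_eq fun x ↦
    (IsLocalization.Away.lift_eq b hbF x).symm
  have : Nontrivial (Localization.Away b) := (IsLocalization.Away.lift b hbF).domain_nontrivial
  have hb : b ≠ 0 := by
    rintro rfl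
    simp at hbF
  let e : F ⊗[Localization.Away b] LocalizedModule.Away b M ≃ₗ[F] F ⊗[R] M := tensorAwayEquiv F
  refine ⟨.equiv e, Cardinal.lift_injective.{max u v w} ?_⟩
  rw [← e.lift_rank_eq, Module.rank_baseChange, rank_localizedModule_away hb]
  simp

end BaseChange

section QuotientFields

open TensorProduct

theorem subalgebra_eq_top_of_forall_eq_div {F E : Type*} [Field F] [Field E] [Algebra F E]
    (A : Subalgebra F E) [Algebra.IsAlgebraic F A]
    (hdiv : ∀ z : E, ∃ x ∈ A, ∃ y ∈ A, z = x / y) : A = ⊤ := by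
  refine eq_top_iff.mpr fun z _ ↦ ?_
  obtain ⟨x, hx, y, hy, rfl⟩ := hdiv z
  have hy_alg : IsAlgebraic F y := (Algebra.IsAlgebraic.isAlgebraic (⟨y, hy⟩ : A)).algebraMap
  rw [div_eq_mul_inv]
  exact A.mul_mem hx (A.inv_mem_of_algebraic (x := ⟨y, hy⟩) hy_alg)

theorem exists_surjective_algHom_tensorProduct {R S F E : Type*} [CommRing R] [CommRing S]
    [Field F] [Field E] [Algebra R S] [Algebra R F] [Algebra R E] [Algebra S E] [Algebra F E]
    [IsScalarTower R S E] [IsScalarTower R F E] [Algebra.IsAlgebraic F (F ⊗[R] S)]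
    (hdiv : ∀ z : E, ∃ x y : S, z = algebraMap S E x / algebraMap S E y) :
    ∃ φ : F ⊗[R] S →ₐ[F] E, Function.Surjective φ := by
  let φ : F ⊗[R] S →ₐ[F] E := Algebra.TensorProduct.lift (Algebra.ofId F E)
    (IsScalarTower.toAlgHom R S E) fun _ _ ↦ .all _ _
  have hmem (s : S) : algebraMap S E s ∈ φ.range := ⟨1 ⊗ₜ s, by simp [φ]⟩
  have : Algebra.IsAlgebraic F φ.range :=
    ⟨φ.rangeRestrict_surjective.forall.mpr fun t ↦
      (Algebra.IsAlgebraic.isAlgebraic t).algHom φ.rangeRestrict⟩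
  refine ⟨φ, (AlgHom.range_eq_top φ).mp (subalgebra_eq_top_of_forall_eq_div _ fun z ↦ ?_)⟩
  obtain ⟨x, y, rfl⟩ := hdiv z
  exact ⟨_, hmem x, _, hmem y, rfl⟩

end QuotientFields

section Fibres

open TensorProduct

theorem isUnit_algebraMap_resField {R : Type*} [CommRing R] {p : PrimeSpectrum R} {b : R}
    (hb : b ∉ p.asIdeal) : IsUnit (algebraMap R (resField R p.asIdeal) b) := by
  rw [isUnit_iff_ne_zero, IsScalarTower.algebraMap_apply R (R ⧸ p.asIdeal), Ne,
    IsFractionRing.to_map_eq_zero_iff]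
  exact Ideal.Quotient.eq_zero_iff_mem.not.mpr hb

theorem resFieldMap_algebraMap {R S : Type*} [CommRing R] [CommRing S] (f : R →+* S)
    (p : Ideal R) (q : Ideal S) [p.IsPrime] [q.IsPrime] (h : q.comap f = p) (x : R) :
    resFieldMap f p q h (algebraMap R (resField R p) x) = algebraMap S (resField S q) (f x) :=
  IsFractionRing.lift_algebraMap _ (Ideal.Quotient.mk p x)

theorem exists_eq_algebraMap_div_algebraMap_resField {S : Type*} [CommRing S] {q : Ideal S}
    [q.IsPrime] (z : resField S q) :
    ∃ x y : S, z = algebraMap S (resField S q) x / algebraMap S (resField S q) y := by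
  obtain ⟨x, y, -, rfl⟩ := IsFractionRing.div_surjective (A := S ⧸ q) z
  obtain ⟨x, rfl⟩ := Ideal.Quotient.mk_surjective x
  obtain ⟨y, rfl⟩ := Ideal.Quotient.mk_surjective y
  exact ⟨x, y, rfl⟩

theorem fracRank_algebraMap (R S : Type u) [CommRing R] [IsDomain R] [CommRing S] [IsDomain S]
    [Algebra R S] [FaithfulSMul R S] [Algebra.IsAlgebraic R S] :
    fracRank (algebraMap R S) = Module.rank R S := by
  unfold fracRank
  rw [dif_pos (FaithfulSMul.algebraMap_injective R S)]
  exact Algebra.IsAlgebraic.rank_fractionRing R S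

theorem fibreRank_algebraMap {R S : Type*} [CommRing R] [CommRing S] [Algebra R S]
    (p : PrimeSpectrum R) :
    fibreRank (algebraMap R S) p =
      Module.rank (resField R p.asIdeal) (resField R p.asIdeal ⊗[R] S) := by
  have halg : (algebraMap R S).toAlgebra = ‹Algebra R S› := Algebra.algebra_ext _ _ fun _ ↦ rfl
  rw [fibreRank, halg]

theorem exists_comap_eq_of_fibreRank_ne_zero {R S : Type*} [CommRing R] [CommRing S]
    [Algebra R S] {p : PrimeSpectrum R} (hp : fibreRank (algebraMap R S) p ≠ 0) :
    ∃ q : PrimeSpectrum S, q.asIdeal.comap (algebraMap R S) = p.asIdeal := by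
  have : Nontrivial (resField R p.asIdeal ⊗[R] S) := by
    rwa [fibreRank_algebraMap, ← pos_iff_ne_zero, rank_pos_iff_nontrivial] at hp
  let e : resField R p.asIdeal ≃ₐ[R] p.asIdeal.ResidueField :=
    (FractionRing.algEquiv (R ⧸ p.asIdeal) p.asIdeal.ResidueField).restrictScalars R
  have : Nontrivial (p.asIdeal.ResidueField ⊗[R] S) :=
    (TensorProduct.congr e.toLinearEquiv (.refl R S)).symm.toEquiv.nontrivial
  obtain ⟨q, hq⟩ := (PrimeSpectrum.nontrivial_iff_mem_rangeComap p).mp this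
  exact ⟨q, congrArg PrimeSpectrum.asIdeal hq⟩

theorem resRank_le_fibreRank {R S : Type u} [CommRing R] [CommRing S] [Algebra R S]
    (p : PrimeSpectrum R) (q : PrimeSpectrum S)
    [Algebra.IsAlgebraic (resField R p.asIdeal) (resField R p.asIdeal ⊗[R] S)] :
    resRank (algebraMap R S) p q ≤ fibreRank (algebraMap R S) p := by
  unfold resRank
  split_ifs with h
  · let : Algebra (resField R p.asIdeal) (resField S q.asIdeal) :=
      (resFieldMap (algebraMap R S) p.asIdeal q.asIdeal h).toAlgebra
    have : IsScalarTower R (resField R p.asIdeal) (resField S q.asIdeal) :=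
      .of_algebraMap_eq fun x ↦ (resFieldMap_algebraMap (algebraMap R S) _ _ h x).symm
    obtain ⟨φ, hφ⟩ := exists_surjective_algHom_tensorProduct (R := R)
      (F := resField R p.asIdeal) (exists_eq_algebraMap_div_algebraMap_resField (q := q.asIdeal))
    rw [fibreRank_algebraMap]
    exact LinearMap.rank_le_of_surjective φ.toLinearMap hφ
  · exact zero_le

end Fibres

theorem generic_behaviour_of_algebraic_extension_general
    (R S : Type u) [CommRing R] [IsDomain R] [CommRing S] [IsDomain S]
    (f : R →+* S) (hinj : Function.Injective f)
    (hft : f.FiniteType) (halg : f.IsAlgebraicOver) :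
    ∃ b : R, b ≠ 0 ∧ ∀ p : PrimeSpectrum R, b ∉ p.asIdeal →
      (∃ q : PrimeSpectrum S, q.asIdeal.comap f = p.asIdeal) ∧
      fibreRank f p = fracRank f ∧
      (∀ q : PrimeSpectrum S, q.asIdeal.comap f = p.asIdeal →
        resRank f p q ≤ fracRank f) := by
  algebraize [f]
  have : FaithfulSMul R S := (faithfulSMul_iff_algebraMap_injective R S).mpr hinj
  have : Algebra.IsAlgebraic R S := ⟨halg⟩
  obtain ⟨b, hb, _, _⟩ := exists_free_finite_localizedModule_away R S
  refine ⟨b, hb, fun p hp ↦ ?_⟩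
  obtain ⟨_, hrank⟩ := finite_and_rank_tensorProduct_of_isUnit (M := S) (resField R p.asIdeal)
    (isUnit_algebraMap_resField hp)
  have hfibre : fibreRank f p = fracRank f := by
    rw [Cardinal.lift_id, ← fracRank_algebraMap R S, ← fibreRank_algebraMap] at hrank
    exact hrank
  have hfrac : fracRank f ≠ 0 :=
    (fracRank_algebraMap R S).trans_ne (rank_pos (R := R) (M := S)).ne'
  exact ⟨exists_comap_eq_of_fibreRank_ne_zero (S := S) (hfibre.trans_ne hfrac), hfibre,
    fun q _ ↦ (resRank_le_fibreRank (S := S) p q).trans_eq hfibre⟩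

/-- **Generic behaviour of an algebraic extension of integral domains.**
Let `k₀` be a field of characteristic zero, `B₀` a finitely generated `k₀`-algebra that is an
integral domain, and `B₀'` an integral domain containing `B₀` such that `B₀'` is algebraic over
`B₀` and a finitely generated `B₀`-algebra.  Then there exists a nonzero `b ∈ B₀` such that for
every prime ideal `𝔭` of `B₀` with `b ∉ 𝔭`:
(i) there exists a prime ideal of `B₀'` lying over `𝔭`;
(ii) the fibre `B₀' ⊗_{B₀} κ(𝔭)` is a `κ(𝔭)`-vector space of dimension
`[Frac(B₀') : Frac(B₀)]`; and
(iii) every prime ideal `𝔭'` of `B₀'` lying over `𝔭` satisfies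
`[κ(𝔭') : κ(𝔭)] ≤ [Frac(B₀') : Frac(B₀)]`. -/
theorem generic_behaviour_of_algebraic_extension
    (k₀ : Type*) [Field k₀] [CharZero k₀]
    (B₀ : Type u) [CommRing B₀] [IsDomain B₀] [Algebra k₀ B₀] [Algebra.FiniteType k₀ B₀]
    (B₀' : Type u) [CommRing B₀'] [IsDomain B₀']
    (f : B₀ →+* B₀') (hinj : Function.Injective f)
    (hft : f.FiniteType) (halg : f.IsAlgebraicOver) :
    ∃ b : B₀, b ≠ 0 ∧ ∀ p : PrimeSpectrum B₀, b ∉ p.asIdeal →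
      (∃ q : PrimeSpectrum B₀', q.asIdeal.comap f = p.asIdeal) ∧
      fibreRank f p = fracRank f ∧
      (∀ q : PrimeSpectrum B₀', q.asIdeal.comap f = p.asIdeal →
        resRank f p q ≤ fracRank f) :=
  generic_behaviour_of_algebraic_extension_general B₀ B₀' f hinj hft halg

end
end

section
/- Let k₀ be a field of characteristic zero, B₀ a finitely generated k₀-algebra that is an integral domain, and B₀' an integral domain containing B₀ such that B₀' is algebraic over B₀ and a finitely generated B₀-algebra. Let π : Spec(B₀') → Spec(B₀) be the morphism corresponding to the inclusion B₀ ⊆ B₀', and let H' be a Hilbert subset of Spec(B₀'). Then there exists a Hilbert subset H of Spec(B₀) such that H ⊆ π(H') and, for every 𝔭 ∈ H, there is exactly one prime ideal of B₀' lying over 𝔭. -/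
/-!
Ranks of fraction fields are multiplicative in towers `R ⊆ S ⊆ T`, and so are residue degrees, a
residue degree being the rank of the fraction fields of the quotients. If `p` lies in both `H(S/R)`
and `H(T/R)` and `q` is the prime of `S` over `p`, then the prime of `T` over `p` lies over `q`, and
cancelling the finite nonzero cardinal `[κ(q) : κ(p)] = [Frac S : Frac R]` from the tower formulas
gives `q ∈ H(T/S)`. Hence a Hilbert set of `S` cut out by extensions `Tᵢ` and by `s ≠ 0` can be
replaced below by the Hilbert set of `R` cut out by `S`, the `Tᵢ` and a nonzero multiple of `s` that
comes from `R`.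
-/

section FractionFieldRank

variable {R : Type*} {S T : Type v} [CommRing R] [IsDomain R] [CommRing S] [IsDomain S]
  [CommRing T] [IsDomain T] {f : R →+* S} {g : S →+* T}

variable (R S) in
theorem fracRank_algebraMap_s4 [Algebra R S] [FaithfulSMul R S] :
    letI := FractionRing.liftAlgebra R (FractionRing S)
    fracRank (algebraMap R S) = Module.rank (FractionRing R) (FractionRing S) :=
  dif_pos (FaithfulSMul.algebraMap_injective R S)

theorem fracRank_ne_zero (hf : Function.Injective f) : fracRank f ≠ 0 := by
  let := f.toAlgebra
  have : FaithfulSMul R S := (faithfulSMul_iff_algebraMap_injective R S).2 hf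
  let := FractionRing.liftAlgebra R (FractionRing S)
  change fracRank (algebraMap R S) ≠ 0
  rw [fracRank_algebraMap_s4]
  exact rank_pos.ne'

theorem fracRank_comp (hf : Function.Injective f) (hg : Function.Injective g) :
    fracRank (g.comp f) = fracRank f * fracRank g := by
  algebraize [f, g, g.comp f]
  have : FaithfulSMul R S := (faithfulSMul_iff_algebraMap_injective R S).2 hf
  have : FaithfulSMul S T := (faithfulSMul_iff_algebraMap_injective S T).2 hg
  have : FaithfulSMul R T := .trans R S T
  let := FractionRing.liftAlgebra R (FractionRing S)
  let := FractionRing.liftAlgebra S (FractionRing T)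
  let := FractionRing.liftAlgebra R (FractionRing T)
  change fracRank (algebraMap R T) = fracRank (algebraMap R S) * fracRank (algebraMap S T)
  rw [fracRank_algebraMap_s4, fracRank_algebraMap_s4, fracRank_algebraMap_s4]
  exact (rank_mul_rank (FractionRing R) (FractionRing S) (FractionRing T)).symm

theorem fracRank_lt_aleph0 (hf : Function.Injective f) (hft : f.FiniteType)
    (halg : f.IsAlgebraicOver) : fracRank f < Cardinal.aleph0 := by
  let := f.toAlgebra
  have : FaithfulSMul R S := (faithfulSMul_iff_algebraMap_injective R S).2 hf
  have : Algebra.FiniteType R S := hft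
  have : Algebra.IsAlgebraic R S := ⟨halg⟩
  let := FractionRing.liftAlgebra R (FractionRing S)
  have : Algebra.IsAlgebraic R (FractionRing S) :=
    (IsFractionRing.isAlgebraic_iff' R S (FractionRing S)).1 inferInstance
  have : Algebra.IsAlgebraic (FractionRing R) (FractionRing S) :=
    (IsFractionRing.comap_isAlgebraic_iff (A := R)).1 inferInstance
  have : Algebra.EssFiniteType R (FractionRing S) :=
    Algebra.EssFiniteType.comp R S (FractionRing S)
  have : Algebra.EssFiniteType (FractionRing R) (FractionRing S) :=
    Algebra.EssFiniteType.of_comp R _ _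
  have : FiniteDimensional (FractionRing R) (FractionRing S) :=
    Algebra.finite_of_essFiniteType_of_isAlgebraic
  change fracRank (algebraMap R S) < _
  rw [fracRank_algebraMap_s4]
  exact Module.rank_lt_aleph0 (FractionRing R) (FractionRing S)

end FractionFieldRank

section ResidueDegree

variable {R : Type*} {S T : Type v} [CommRing R] [CommRing S] [CommRing T] {f : R →+* S}
  {g : S →+* T} {p : PrimeSpectrum R} {q : PrimeSpectrum S} {r : PrimeSpectrum T}

theorem resRank_eq_fracRank_quotientMap (h : q.asIdeal.comap f = p.asIdeal) :
    resRank f p q = fracRank (Ideal.quotientMap q.asIdeal f h.ge) := by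
  rw [resRank, dif_pos h, fracRank, dif_pos (Ideal.quotientMap_injective' (H := h.ge) h.le)]
  rfl

theorem resRank_comp (hq : q.asIdeal.comap f = p.asIdeal)
    (hr : r.asIdeal.comap g = q.asIdeal) :
    resRank (g.comp f) p r = resRank f p q * resRank g q r := by
  have hrp : r.asIdeal.comap (g.comp f) = p.asIdeal := by rw [← Ideal.comap_comap, hr, hq]
  rw [resRank_eq_fracRank_quotientMap hq, resRank_eq_fracRank_quotientMap hr,
    resRank_eq_fracRank_quotientMap hrp,
    ← fracRank_comp (Ideal.quotientMap_injective' hq.le) (Ideal.quotientMap_injective' hr.le)]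
  congr 1
  exact Ideal.Quotient.ringHom_ext rfl

end ResidueDegree

section Tower

theorem cardinal_eq_of_mul_eq_mul_left {a b c : Cardinal} (ha₀ : a ≠ 0) (ha : a < Cardinal.aleph0)
    (h : a * b = a * c) : b = c := by
  have mul_eq_self_of_infinite {x : Cardinal} (hx : Cardinal.aleph0 ≤ x) : a * x = x :=
    Cardinal.mul_eq_right hx (ha.le.trans hx) ha₀
  rcases lt_or_ge b Cardinal.aleph0 with hb | hb <;> rcases lt_or_ge c Cardinal.aleph0 with hc | hc
  · lift a to ℕ using ha
    lift b to ℕ using hb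
    lift c to ℕ using hc
    norm_cast at *
    exact Nat.eq_of_mul_eq_mul_left (Nat.pos_of_ne_zero ha₀) h
  · exact absurd (h ▸ Cardinal.mul_lt_aleph0 ha hb) (mul_eq_self_of_infinite hc ▸ hc).not_gt
  · exact absurd (h ▸ Cardinal.mul_lt_aleph0 ha hc) (mul_eq_self_of_infinite hb ▸ hb).not_gt
  · rwa [mul_eq_self_of_infinite hb, mul_eq_self_of_infinite hc] at h

theorem existsUnique_comap_eq_of_comp {R S T : Type*} [CommRing R] [CommRing S] [CommRing T]
    {f : R →+* S} {g : S →+* T} {p : PrimeSpectrum R} {q : PrimeSpectrum S}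
    (hq : q.asIdeal.comap f = p.asIdeal)
    (hS : ∃! q : PrimeSpectrum S, q.asIdeal.comap f = p.asIdeal)
    (hT : ∃! r : PrimeSpectrum T, r.asIdeal.comap (g.comp f) = p.asIdeal) :
    ∃! r : PrimeSpectrum T, r.asIdeal.comap g = q.asIdeal := by
  obtain ⟨r, hr, r_unique⟩ := hT
  have hrq : PrimeSpectrum.comap g r = q := hS.unique hr hq
  refine ⟨r, congrArg PrimeSpectrum.asIdeal hrq, fun r' hr' => ?_⟩
  change r'.asIdeal.comap g = q.asIdeal at hr'
  have hr'p : r'.asIdeal.comap (g.comp f) = p.asIdeal := by rw [← Ideal.comap_comap, hr', hq]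
  exact r_unique r' hr'p

theorem mem_basicHilbertSet_of_mem_comp {R : Type*} {S T : Type v} [CommRing R] [IsDomain R]
    [CommRing S] [IsDomain S] [CommRing T] [IsDomain T] {f : R →+* S} {g : S →+* T}
    (hf : Function.Injective f) (hfin : fracRank f < Cardinal.aleph0) (hg : Function.Injective g)
    {p : PrimeSpectrum R} {q : PrimeSpectrum S} (hq : q.asIdeal.comap f = p.asIdeal)
    (hp : p ∈ basicHilbertSet f) (hp' : p ∈ basicHilbertSet (g.comp f)) :
    q ∈ basicHilbertSet g := by
  obtain ⟨hS, deg_f⟩ := hp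
  obtain ⟨hT, deg_gf⟩ := hp'
  refine ⟨existsUnique_comap_eq_of_comp hq hS hT, fun r hr => ?_⟩
  refine cardinal_eq_of_mul_eq_mul_left (fracRank_ne_zero hf) hfin ?_
  calc fracRank f * resRank g q r
      = resRank f p q * resRank g q r := by rw [deg_f q hq]
    _ = resRank (g.comp f) p r := (resRank_comp hq hr).symm
    _ = fracRank (g.comp f) := deg_gf r (by rw [← Ideal.comap_comap, hr, hq])
    _ = fracRank f * fracRank g := fracRank_comp hf hg

end Tower

section Algebraic

theorem isAlgebraicOver_comp {R S T : Type*} [CommRing R] [CommRing S] [NoZeroDivisors S]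
    [CommRing T] {f : R →+* S} {g : S →+* T} (hf : f.IsAlgebraicOver) (hg : g.IsAlgebraicOver) :
    (g.comp f).IsAlgebraicOver := by
  algebraize [f, g, g.comp f]
  have : Algebra.IsAlgebraic R S := ⟨hf⟩
  have : Algebra.IsAlgebraic S T := ⟨hg⟩
  exact (Algebra.IsAlgebraic.trans R S T).isAlgebraic

theorem exists_ne_zero_dvd_map_of_isAlgebraicOver {R S : Type*} [CommRing R] [CommRing S]
    [NoZeroDivisors S] {f : R →+* S} (hf : f.IsAlgebraicOver) {s : S} (hs : s ≠ 0) :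
    ∃ r : R, r ≠ 0 ∧ s ∣ f r :=
  let := f.toAlgebra
  IsAlgebraic.exists_nonzero_dvd (hf s) (mem_nonZeroDivisors_of_ne_zero hs)

/-- The tower `R ⊆ S ⊆ T` of two extensions `E : R ⊆ S` and `F : S ⊆ T`, regarded as the single
extension `R ⊆ T`; its basic Hilbert set in `Spec R` controls that of `F` in `Spec S`. -/
def AlgExt.trans {R : Type u} [CommRing R] (E : AlgExt R) (F : AlgExt E.carrier) : AlgExt R where
  carrier := F.carrier
  hom := F.hom.comp E.hom
  inj := F.inj.comp E.inj
  ft := F.ft.comp E.ft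
  alg := isAlgebraicOver_comp E.alg F.alg

theorem mem_basicHilbertSet_of_mem_trans {R : Type u} [CommRing R] [IsDomain R] {E : AlgExt R}
    {F : AlgExt E.carrier} {p : PrimeSpectrum R} {q : PrimeSpectrum E.carrier}
    (hq : q.asIdeal.comap E.hom = p.asIdeal) (hp : p ∈ basicHilbertSet E.hom)
    (hp' : p ∈ basicHilbertSet (E.trans F).hom) : q ∈ basicHilbertSet F.hom :=
  mem_basicHilbertSet_of_mem_comp E.inj (fracRank_lt_aleph0 E.inj E.ft E.alg) F.inj hq hp hp'

end Algebraic

theorem hilbertSet_under_projection_general {R S : Type u} [CommRing R] [IsDomain R] [CommRing S]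
    [IsDomain S] {f : R →+* S} (hinj : Function.Injective f) (hft : f.FiniteType)
    (halg : f.IsAlgebraicOver) {H' : Set (PrimeSpectrum S)} (hH' : IsHilbertSet H') :
    ∃ H : Set (PrimeSpectrum R), IsHilbertSet H ∧
      H ⊆ PrimeSpectrum.comap f '' H' ∧
      ∀ p ∈ H, ∃! q : PrimeSpectrum S, q.asIdeal.comap f = p.asIdeal := by
  obtain ⟨n, F, s, hs, rfl⟩ := hH'
  obtain ⟨r, hr, s_dvd⟩ := exists_ne_zero_dvd_map_of_isAlgebraicOver halg hs
  let E : AlgExt R := ⟨S, f, hinj, hft, halg⟩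
  let G : Fin (n + 1) → AlgExt R := Fin.cons E fun i => E.trans (F i)
  refine ⟨_, ⟨n + 1, G, r, hr, rfl⟩, ?_, fun p hp => (Set.mem_iInter.1 hp.1 0).1⟩
  rintro p ⟨hp, hrp⟩
  have hpS : p ∈ basicHilbertSet f := Set.mem_iInter.1 hp 0
  have hpT (i : Fin n) : p ∈ basicHilbertSet (E.trans (F i)).hom := Set.mem_iInter.1 hp i.succ
  obtain ⟨q, hq, -⟩ := hpS.1
  have hqF (i : Fin n) : q ∈ basicHilbertSet (F i).hom :=
    mem_basicHilbertSet_of_mem_trans hq hpS (hpT i)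
  have hsq : s ∉ q.asIdeal := fun hmem =>
    hrp (hq ▸ Ideal.mem_comap.2 (q.asIdeal.mem_of_dvd s_dvd hmem))
  exact ⟨q, ⟨Set.mem_iInter.2 hqF, hsq⟩, PrimeSpectrum.ext hq⟩

/-- **Pushing Hilbert sets down an algebraic extension.**
Let `k₀` be a field of characteristic zero, `B₀` a finitely generated `k₀`-algebra that is an
integral domain, and `B₀'` an integral domain containing `B₀` such that `B₀'` is algebraic over
`B₀` and a finitely generated `B₀`-algebra.  Let `π : Spec(B₀') → Spec(B₀)` be the morphism
corresponding to the inclusion `B₀ ⊆ B₀'`, and let `H'` be a Hilbert subset of `Spec(B₀')`.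
Then there exists a Hilbert subset `H` of `Spec(B₀)` such that `H ⊆ π(H')` and, for every
`𝔭 ∈ H`, there is exactly one prime ideal of `B₀'` lying over `𝔭`. -/
theorem hilbertSet_under_projection
    (k₀ : Type*) [Field k₀] [CharZero k₀]
    (B₀ : Type u) [CommRing B₀] [IsDomain B₀] [Algebra k₀ B₀] [Algebra.FiniteType k₀ B₀]
    (B₀' : Type u) [CommRing B₀'] [IsDomain B₀']
    (f : B₀ →+* B₀') (hinj : Function.Injective f)
    (hft : f.FiniteType) (halg : f.IsAlgebraicOver)
    (H' : Set (PrimeSpectrum B₀')) (hH' : IsHilbertSet H') :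
    ∃ H : Set (PrimeSpectrum B₀), IsHilbertSet H ∧
      H ⊆ (PrimeSpectrum.comap f) '' H' ∧
      ∀ p ∈ H, ∃! q : PrimeSpectrum B₀', q.asIdeal.comap f = p.asIdeal := by
  exact hilbertSet_under_projection_general hinj hft halg hH'
end

section
/- Let k₀ be a field of characteristic zero, B₀ a finitely generated k₀-algebra that is an integral domain, and B₀' an integral domain containing B₀ such that B₀' is a finitely generated B₀-algebra and algebraic over B₀. Then there exist a monic polynomial f ∈ B₀[y] that is irreducible in Frac(B₀)[y] and a nonzero b ∈ B₀ such that H_{B₀}(f) ∩ D(b) ⊆ H(B₀'/B₀). -/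
open Polynomial IntermediateField
open scoped nonZeroDivisors Pointwise

section AdjoinSimple

variable {F E : Type*} [Field F] [Field E] [Algebra F E] {x : E}

theorem rank_eq_natDegree_of_adjoin_simple_eq_top (hx : F⟮x⟯ = ⊤) {p : F[X]} (hmonic : p.Monic)
    (hirr : Irreducible p) (hroot : aeval x p = 0) : Module.rank F E = p.natDegree := by
  have hint : IsIntegral F x := ⟨p, hmonic, hroot⟩
  have : FiniteDimensional F E := by
    have := adjoin.finiteDimensional hint
    rw [hx] at this
    exact .equiv topEquiv.toLinearEquiv
  rw [← Module.finrank_eq_rank, ← IntermediateField.finrank_top', ← hx, adjoin.finrank hint,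
    minpoly.eq_of_irreducible_of_monic hirr hroot hmonic]

theorem adjoin_simple_smul_eq_top (hx : F⟮x⟯ = ⊤) {c : F} (hc : c ≠ 0) : F⟮c • x⟯ = ⊤ := by
  rw [eq_top_iff, ← hx, adjoin_simple_le_iff]
  simpa [hc] using F⟮c • x⟯.smul_mem (mem_adjoin_simple_self F (c • x)) (x := c⁻¹)

end AdjoinSimple

theorem exists_smul_minpoly_eq_map (R : Type*) {K L : Type*} [CommRing R] [Field K] [Field L]
    [Algebra R K] [Algebra K L] [IsFractionRing R K] {x : L} (hx : IsIntegral K x) :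
    ∃ r : R, algebraMap R K r ≠ 0 ∧ ∃ g : R[X], g.Monic ∧
      minpoly K (algebraMap R K r • x) = g.map (algebraMap R K) := by
  set m := minpoly K x
  have hm : m.Monic := minpoly.monic hx
  set r := IsLocalization.commonDenom R⁰ m.support m.coeff
  have hr : algebraMap R K r ≠ 0 := (IsLocalization.map_units K r).ne_zero
  obtain ⟨g, hg, -, hgm⟩ := lifts_and_natDegree_eq_and_monic
    (IsLocalization.scaleRoots_commonDenom_mem_lifts R⁰ m
      (by rw [hm.leadingCoeff]; exact one_mem _)) (by rwa [monic_scaleRoots_iff])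
  exact ⟨r, hr, g, hgm, (IsIntegrallyClosed.minpoly_smul hr hx).trans hg.symm⟩

/-- `θ` generates `S[1/b]` as an algebra over `R[1/b]`, stated without localizing. -/
def IsGeneratorAway {R S : Type*} [CommRing R] [CommRing S] [Algebra R S] (b : R) (θ : S) : Prop :=
  ∀ s : S, ∃ n : ℕ, b ^ n • s ∈ Algebra.adjoin R {θ}

section FractionField

variable (R S K L : Type*) [CommRing R] [CommRing S] [Field K] [Field L] [Algebra R S]
  [Algebra R K] [Algebra S L] [Algebra K L] [Algebra R L] [IsScalarTower R S L]
  [IsScalarTower R K L] [IsFractionRing S L]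

theorem finiteDimensional_of_finiteType [Algebra.FiniteType R S] [Algebra.IsAlgebraic K L] :
    FiniteDimensional K L := by
  have : Algebra.EssFiniteType R S := .of_finiteType R S
  have : Algebra.EssFiniteType S L := .of_isLocalization L S⁰
  have : Algebra.EssFiniteType R L := .comp R S L
  have : Algebra.EssFiniteType K L := .of_comp R K L
  exact Algebra.finite_of_essFiniteType_of_isAlgebraic

variable [IsFractionRing R K]

theorem exists_primitive_element_minpoly_eq_map [IsDomain R] [IsDomain S] [FaithfulSMul R S]
    [FiniteDimensional K L] [Algebra.IsSeparable K L] :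
    ∃ (θ : S) (g : R[X]), g.Monic ∧ K⟮algebraMap S L θ⟯ = ⊤ ∧
      minpoly K (algebraMap S L θ) = g.map (algebraMap R K) := by
  have : Algebra.IsAlgebraic R L := (IsFractionRing.comap_isAlgebraic_iff (K := K)).2 inferInstance
  have : Algebra.IsAlgebraic R S := .tower_bot_of_injective (IsFractionRing.injective S L)
  obtain ⟨α, hα⟩ := Field.exists_primitive_element K L
  obtain ⟨⟨s, r⟩, hs⟩ := IsLocalizedModule.surj R⁰ (IsScalarTower.toAlgHom R S L).toLinearMap α
  have hs : algebraMap R K r • α = algebraMap S L s := (algebraMap_smul K (r : R) α).trans hs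
  have hr : algebraMap R K r ≠ 0 := (IsLocalization.map_units K r).ne_zero
  obtain ⟨c, hc, g, hg, hmin⟩ :=
    exists_smul_minpoly_eq_map R (Algebra.IsIntegral.isIntegral (R := K) (algebraMap S L s))
  have hcs : algebraMap S L (c • s) = algebraMap R K c • algebraMap S L s := by
    rw [algebraMap_smul]
    exact map_smul (IsScalarTower.toAlgHom R S L) c s
  refine ⟨c • s, g, hg, ?_, hcs ▸ hmin⟩
  rw [hcs, ← hs]
  exact adjoin_simple_smul_eq_top (adjoin_simple_smul_eq_top hα hr) hc

variable {R S K L}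

theorem exists_smul_mem_adjoin_of_adjoin_simple_eq_top [Algebra.IsAlgebraic K L] {θ : S}
    (hθ : K⟮algebraMap S L θ⟯ = ⊤) (s : S) : ∃ c : R⁰, (c : R) • s ∈ Algebra.adjoin R {θ} := by
  have hadj := Algebra.adjoin_eq_top_of_primitive_element
    (Algebra.IsAlgebraic.isAlgebraic (R := K) (algebraMap S L θ)) hθ
  obtain ⟨c, hc⟩ := multiple_mem_adjoin_of_mem_localization_adjoin R⁰ K {algebraMap S L θ}
    (algebraMap S L s) (hadj ▸ Algebra.mem_top)
  rw [← IsScalarTower.coe_toAlgHom' R S L, ← Set.image_singleton, ← AlgHom.map_adjoin] at hc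
  obtain ⟨t, ht, hts⟩ := hc
  have : t = (c : R) • s := IsFractionRing.injective S L (hts.trans (map_smul _ (c : R) s).symm)
  exact ⟨c, this ▸ ht⟩

theorem exists_isGeneratorAway [Algebra.FiniteType R S] [Algebra.IsAlgebraic K L] {θ : S}
    (hθ : K⟮algebraMap S L θ⟯ = ⊤) : ∃ b ∈ R⁰, IsGeneratorAway b θ := by
  obtain ⟨T, hT⟩ := (Algebra.FiniteType.out : (⊤ : Subalgebra R S).FG)
  choose c hc using exists_smul_mem_adjoin_of_adjoin_simple_eq_top (R := R) hθ
  refine ⟨∏ t ∈ T, (c t : R), prod_mem fun t _ ↦ (c t).2, fun s ↦ ?_⟩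
  have hsub : (∏ t ∈ T, (c t : R)) • (T : Set S) ⊆ Algebra.adjoin R {θ} := by
    rintro _ ⟨t, ht, rfl⟩
    obtain ⟨a, ha⟩ := Finset.dvd_prod_of_mem (fun t ↦ (c t : R)) ht
    simpa only [ha, mul_comm _ a, mul_smul, SetLike.mem_coe] using Subalgebra.smul_mem _ (hc t) a
  obtain ⟨n, hn⟩ := Algebra.pow_smul_mem_of_smul_subset_of_mem_adjoin _ _ _ hsub
    (hT ▸ Algebra.mem_top : s ∈ Algebra.adjoin R T) (Subalgebra.algebraMap_mem _ _)
  exact ⟨n, hn n le_rfl⟩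

end FractionField

theorem exists_prime_comap_eq_of_pow_smul_mem_range {A S : Type*} [CommRing A] [CommRing S]
    [Algebra A S] [FaithfulSMul A S] {b : A}
    (hb : ∀ s : S, ∃ n : ℕ, b ^ n • s ∈ (algebraMap A S).range) (Q : Ideal A) [hQ : Q.IsPrime]
    (hbQ : b ∉ Q) : ∃ q : Ideal S, q.IsPrime ∧ q.comap (algebraMap A S) = Q := by
  rw [← Ideal.comap_map_eq_self_iff_of_isPrime]
  refine le_antisymm (fun a ha ↦ ?_) Ideal.le_comap_map
  have hmem : ∀ s ∈ Q.map (algebraMap A S), ∃ n : ℕ, ∃ x ∈ Q, b ^ n • s = algebraMap A S x := by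
    intro s hs
    induction hs using Submodule.span_induction with
    | mem _ hx =>
      obtain ⟨x, hx, rfl⟩ := hx
      exact ⟨0, x, hx, by simp⟩
    | zero => exact ⟨0, 0, Q.zero_mem, by simp⟩
    | add s t _ _ hs ht =>
      obtain ⟨m, x, hx, hs⟩ := hs
      obtain ⟨n, y, hy, ht⟩ := ht
      refine ⟨m + n, b ^ n * x + b ^ m * y, add_mem (Q.mul_mem_left _ hx) (Q.mul_mem_left _ hy), ?_⟩
      simp only [map_add, map_mul, ← hs, ← ht, Algebra.smul_def, map_pow]
      ring
    | smul s t _ ht =>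
      obtain ⟨m, x, hx⟩ := hb s
      obtain ⟨n, y, hy, ht⟩ := ht
      refine ⟨m + n, x * y, Q.mul_mem_left _ hy, ?_⟩
      rw [map_mul, hx, ← ht, pow_add, smul_eq_mul, smul_mul_smul_comm]
  obtain ⟨n, x, hx, hax⟩ := hmem _ ha
  rw [Algebra.smul_def, ← map_mul] at hax
  rw [← FaithfulSMul.algebraMap_injective A S hax] at hx
  exact (hQ.mem_or_mem hx).resolve_left fun hbn ↦ hbQ (hQ.mem_of_pow_mem n hbn)

theorem resCanon_eq_zero_iff {R : Type*} [CommRing R] {p : Ideal R} [p.IsPrime] {r : R} :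
    resCanon R p r = 0 ↔ r ∈ p := by
  rw [resCanon, RingHom.comp_apply, map_eq_zero_iff _ (IsFractionRing.injective (R ⧸ p) _),
    Ideal.Quotient.eq_zero_iff_mem]

theorem exists_resCanon_div_eq {R : Type*} [CommRing R] {p : Ideal R} [p.IsPrime]
    (x : resField R p) : ∃ r s : R, resCanon R p r / resCanon R p s = x := by
  obtain ⟨r, s, -, rfl⟩ := IsFractionRing.div_surjective (A := R ⧸ p) x
  obtain ⟨r, rfl⟩ := Ideal.Quotient.mk_surjective r
  obtain ⟨s, rfl⟩ := Ideal.Quotient.mk_surjective s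
  exact ⟨r, s, rfl⟩

theorem resFieldMap_comp_resCanon {R S : Type*} [CommRing R] [CommRing S] (f : R →+* S)
    (p : Ideal R) (q : Ideal S) [p.IsPrime] [q.IsPrime] (h : q.comap f = p) :
    (resFieldMap f p q h).comp (resCanon R p) = (resCanon S q).comp f := by
  ext r
  simp only [resCanon, resFieldMap, RingHom.comp_apply, IsFractionRing.lift_algebraMap,
    Ideal.quotientMap_mk]

section LiesOver

variable {R S : Type*} [CommRing R] [CommRing S] [Algebra R S] {p : Ideal R} {q : Ideal S}
  [p.IsPrime] [q.IsPrime] (hq : q.comap (algebraMap R S) = p)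

include hq

theorem resCanon_smul (r : R) (s : S) :
    letI := (resFieldMap (algebraMap R S) p q hq).toAlgebra
    resCanon S q (r • s) = resCanon R p r • resCanon S q s := by
  rw [Algebra.smul_def, map_mul]
  exact congrArg (· * _) (RingHom.congr_fun (resFieldMap_comp_resCanon _ p q hq) r).symm

theorem aeval_map_resCanon (P : R[X]) (θ : S) :
    letI := (resFieldMap (algebraMap R S) p q hq).toAlgebra
    aeval (resCanon S q θ) (P.map (resCanon R p)) = resCanon S q (aeval θ P) := by
  let := (resFieldMap (algebraMap R S) p q hq).toAlgebra
  rw [aeval_def, eval₂_map, RingHom.algebraMap_toAlgebra, resFieldMap_comp_resCanon, aeval_def,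
    hom_eval₂]

theorem aeval_mem_iff_map_resCanon_dvd {g : R[X]} {θ : S} (hg : g.Monic) (hroot : aeval θ g = 0)
    (hirr : Irreducible (g.map (resCanon R p))) (P : R[X]) :
    aeval θ P ∈ q ↔ g.map (resCanon R p) ∣ P.map (resCanon R p) := by
  let := (resFieldMap (algebraMap R S) p q hq).toAlgebra
  have hroot' : aeval (resCanon S q θ) (g.map (resCanon R p)) = 0 := by
    rw [aeval_map_resCanon, hroot, map_zero]
  rw [minpoly.eq_of_irreducible_of_monic hirr hroot' (hg.map _), minpoly.dvd_iff,
    aeval_map_resCanon, resCanon_eq_zero_iff]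

end LiesOver

namespace IsGeneratorAway

variable {R S : Type*} [CommRing R] [CommRing S] [Algebra R S] {b : R} {θ : S}

theorem exists_pow_smul_eq_aeval (h : IsGeneratorAway b θ) (s : S) :
    ∃ (n : ℕ) (P : R[X]), b ^ n • s = aeval θ P := by
  obtain ⟨n, hn⟩ := h s
  rw [Algebra.adjoin_singleton_eq_range_aeval] at hn
  obtain ⟨P, hP⟩ := hn
  exact ⟨n, P, hP.symm⟩

theorem exists_primeSpectrum_comap_eq [FaithfulSMul R S] (h : IsGeneratorAway b θ)
    (hθ : IsIntegral R θ) (p : PrimeSpectrum R) (hb : b ∉ p.asIdeal) :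
    ∃ q : PrimeSpectrum S, q.asIdeal.comap (algebraMap R S) = p.asIdeal := by
  let A := Algebra.adjoin R {θ}
  have : Algebra.IsIntegral R A := .adjoin (by simpa using hθ)
  have : FaithfulSMul R A := .tower_bot R A S
  obtain ⟨Q, rfl⟩ := Algebra.IsIntegral.comap_surjective R A p
  obtain ⟨q, hq, hqQ⟩ := exists_prime_comap_eq_of_pow_smul_mem_range (S := S)
    (b := algebraMap R A b) (fun s ↦ by simpa [← map_pow] using h s) Q.asIdeal hb
  refine ⟨⟨q, hq⟩, ?_⟩
  rw [PrimeSpectrum.comap_asIdeal, ← hqQ, Ideal.comap_comap, ← IsScalarTower.algebraMap_eq]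

variable {g : R[X]} {p : PrimeSpectrum R} {q q' : PrimeSpectrum S}

theorem primeSpectrum_eq_of_comap_eq (h : IsGeneratorAway b θ) (hg : g.Monic)
    (hroot : aeval θ g = 0) (hirr : Irreducible (g.map (resCanon R p.asIdeal))) (hb : b ∉ p.asIdeal)
    (hq : q.asIdeal.comap (algebraMap R S) = p.asIdeal)
    (hq' : q'.asIdeal.comap (algebraMap R S) = p.asIdeal) : q = q' := by
  ext s
  obtain ⟨n, P, hP⟩ := h.exists_pow_smul_eq_aeval s
  have hmem {q : PrimeSpectrum S} (hq : q.asIdeal.comap (algebraMap R S) = p.asIdeal) :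
      s ∈ q.asIdeal ↔ g.map (resCanon R p.asIdeal) ∣ P.map (resCanon R p.asIdeal) := by
    have hbq : algebraMap R S b ^ n ∉ q.asIdeal := fun hbn ↦
      hb (hq ▸ q.2.mem_of_pow_mem n hbn)
    rw [← aeval_mem_iff_map_resCanon_dvd hq hg hroot hirr, ← hP, Algebra.smul_def, map_pow,
      q.2.mul_mem_iff_mem_or_mem, or_iff_right hbq]
  rw [hmem hq, hmem hq']

theorem adjoin_resCanon_eq_top (h : IsGeneratorAway b θ) (hb : b ∉ p.asIdeal)
    (hq : q.asIdeal.comap (algebraMap R S) = p.asIdeal) :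
    letI := (resFieldMap (algebraMap R S) p.asIdeal q.asIdeal hq).toAlgebra
    (resField R p.asIdeal)⟮resCanon S q.asIdeal θ⟯ = ⊤ := by
  let := (resFieldMap (algebraMap R S) p.asIdeal q.asIdeal hq).toAlgebra
  set F := (resField R p.asIdeal)⟮resCanon S q.asIdeal θ⟯
  have hmem (s : S) : resCanon S q.asIdeal s ∈ F := by
    obtain ⟨n, P, hP⟩ := h.exists_pow_smul_eq_aeval s
    have hbn : resCanon R p.asIdeal (b ^ n) ≠ 0 :=
      resCanon_eq_zero_iff.not.2 fun hbn ↦ hb (p.2.mem_of_pow_mem n hbn)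
    rw [← inv_smul_smul₀ hbn (resCanon S q.asIdeal s), ← resCanon_smul hq, hP,
      ← aeval_map_resCanon hq]
    exact F.smul_mem (algebra_adjoin_le_adjoin _ _ (aeval_mem_adjoin_singleton _ _))
  rw [eq_top_iff]
  intro x _
  obtain ⟨s, t, rfl⟩ := exists_resCanon_div_eq x
  exact div_mem (hmem s) (hmem t)

theorem resRank_eq_natDegree (h : IsGeneratorAway b θ) (hg : g.Monic) (hroot : aeval θ g = 0)
    (hirr : Irreducible (g.map (resCanon R p.asIdeal))) (hb : b ∉ p.asIdeal)
    (hq : q.asIdeal.comap (algebraMap R S) = p.asIdeal) :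
    resRank (algebraMap R S) p q = g.natDegree := by
  let := (resFieldMap (algebraMap R S) p.asIdeal q.asIdeal hq).toAlgebra
  have hroot' : aeval (resCanon S q.asIdeal θ) (g.map (resCanon R p.asIdeal)) = 0 := by
    rw [aeval_map_resCanon, hroot, map_zero]
  rw [resRank, dif_pos hq, ← hg.natDegree_map (resCanon R p.asIdeal)]
  exact rank_eq_natDegree_of_adjoin_simple_eq_top (h.adjoin_resCanon_eq_top hb hq) (hg.map _) hirr
    hroot'

theorem mem_basicHilbertSet [IsDomain R] [IsDomain S] [FaithfulSMul R S] (h : IsGeneratorAway b θ)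
    (hg : g.Monic) (hroot : aeval θ g = 0)
    (hrank : fracRank (algebraMap R S) = g.natDegree)
    (hirr : p ∈ irreduciblePolySet g) (hb : b ∉ p.asIdeal) :
    p ∈ basicHilbertSet (algebraMap R S) := by
  obtain ⟨q, hq⟩ := h.exists_primeSpectrum_comap_eq ⟨g, hg, hroot⟩ p hb
  exact ⟨⟨q, hq, fun q' hq' ↦ h.primeSpectrum_eq_of_comap_eq hg hroot hirr hb hq' hq⟩,
    fun q' hq' ↦ (h.resRank_eq_natDegree hg hroot hirr hb hq').trans hrank.symm⟩

end IsGeneratorAway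

attribute [local instance] FractionRing.liftAlgebra in
theorem basicHilbertSet_contains_irreduciblePolySet_general {R S : Type*} [CommRing R] [IsDomain R]
    [CommRing S] [IsDomain S] [Algebra R S] [FaithfulSMul R S] [Algebra.FiniteType R S]
    [Algebra.IsSeparable (FractionRing R) (FractionRing S)] :
    ∃ (g : R[X]) (b : R), g.Monic ∧ Irreducible (g.map (algebraMap R (FractionRing R))) ∧ b ≠ 0 ∧
      irreduciblePolySet g ∩ {p | b ∉ p.asIdeal} ⊆ basicHilbertSet (algebraMap R S) := by
  have : FiniteDimensional (FractionRing R) (FractionRing S) :=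
    finiteDimensional_of_finiteType R S _ _
  obtain ⟨θ, g, hg, htop, hmin⟩ :=
    exists_primitive_element_minpoly_eq_map R S (FractionRing R) (FractionRing S)
  obtain ⟨b, hb, hgen⟩ := exists_isGeneratorAway (R := R) htop
  have hirr : Irreducible (g.map (algebraMap R (FractionRing R))) :=
    hmin ▸ minpoly.irreducible (Algebra.IsIntegral.isIntegral _)
  have hrootL : aeval (algebraMap S (FractionRing S) θ)
      (g.map (algebraMap R (FractionRing R))) = 0 :=
    hmin ▸ minpoly.aeval _ _
  have hroot : aeval θ g = 0 := by
    apply IsFractionRing.injective S (FractionRing S)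
    rw [← aeval_algebraMap_apply, ← aeval_map_algebraMap (FractionRing R), hrootL, map_zero]
  have hrank : fracRank (algebraMap R S) = g.natDegree := by
    rw [fracRank, dif_pos (FaithfulSMul.algebraMap_injective R S),
      ← hg.natDegree_map (algebraMap R (FractionRing R))]
    exact rank_eq_natDegree_of_adjoin_simple_eq_top htop (hg.map _) hirr hrootL
  exact ⟨g, b, hg, hirr, nonZeroDivisors.ne_zero hb, fun p ⟨hp, hbp⟩ ↦
    hgen.mem_basicHilbertSet hg hroot hrank hp hbp⟩

/-- **Basic Hilbert sets contain sets defined by irreducibility of a polynomial.**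
Let `k₀` be a field of characteristic zero, `B₀` a finitely generated `k₀`-algebra that is an
integral domain, and `B₀'` an integral domain containing `B₀` such that `B₀'` is a finitely
generated `B₀`-algebra and algebraic over `B₀`.  Then there exist a monic polynomial
`g ∈ B₀[y]` that is irreducible in `Frac(B₀)[y]` and a nonzero `b ∈ B₀` such that
`H_{B₀}(g) ∩ D(b) ⊆ H(B₀'/B₀)`. -/
theorem basicHilbertSet_contains_irreduciblePolySet
    (k₀ : Type*) [Field k₀] [CharZero k₀]
    (B₀ : Type u) [CommRing B₀] [IsDomain B₀] [Algebra k₀ B₀] [Algebra.FiniteType k₀ B₀]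
    (B₀' : Type u) [CommRing B₀'] [IsDomain B₀']
    (f : B₀ →+* B₀') (hinj : Function.Injective f)
    (hft : f.FiniteType) (halg : f.IsAlgebraicOver) :
    ∃ (g : Polynomial B₀) (b : B₀),
      g.Monic ∧ Irreducible (g.map (algebraMap B₀ (FractionRing B₀))) ∧ b ≠ 0 ∧
      irreduciblePolySet g ∩ {p : PrimeSpectrum B₀ | b ∉ p.asIdeal} ⊆
        basicHilbertSet f := by
  algebraize [f]
  have : FaithfulSMul B₀ B₀' := (faithfulSMul_iff_algebraMap_injective B₀ B₀').2 hinj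
  have : Algebra.IsAlgebraic B₀ B₀' := ⟨halg⟩
  have : CharZero (FractionRing B₀) := charZero_of_injective_ringHom
    ((algebraMap B₀ (FractionRing B₀)).comp (algebraMap k₀ B₀)).injective
  let := FractionRing.liftAlgebra B₀ (FractionRing B₀')
  have : Algebra.IsAlgebraic B₀ (FractionRing B₀') :=
    (IsFractionRing.isAlgebraic_iff' B₀ B₀' (FractionRing B₀')).1 inferInstance
  have : Algebra.IsAlgebraic (FractionRing B₀) (FractionRing B₀') :=
    (IsFractionRing.comap_isAlgebraic_iff (A := B₀)).1 inferInstance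
  exact basicHilbertSet_contains_irreduciblePolySet_general
end

section
/- Let k₀ be a field of characteristic zero and B₀ a finitely generated k₀-algebra that is an integral domain. For every Hilbert subset H of Spec(B₀) there exist finitely many monic polynomials f₁,…,f_m ∈ B₀[y], each irreducible in Frac(B₀)[y], and a nonzero b ∈ B₀ such that H_{B₀}(f₁,…,f_m) ∩ D(b) ⊆ H. -/
/-!
Let `S` be a finitely generated algebraic extension domain of `A`. Choose an integral `θ ∈ S` that
is primitive for `Frac S / Frac A` and whose minimal polynomial `f` has coefficients in `A`, and
then `c ≠ 0` in `A` with `S[1/c] = A[1/c][θ]`. Suppose that `c ∉ p` and that `f` stays irreducible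
over `κ(p)`, and let `q` lie over `p`. The image of `θ` generates `κ(q)` over `κ(p)` and has the
reduction of `f` as minimal polynomial, so `[κ(q) : κ(p)] = deg f = [Frac S : Frac A]`. Moreover
`s ∈ q` if and only if the reduction of `f` divides that of `P`, where `c ^ n • s = P(θ)`; this
depends on `p` only, so `q` is unique. It exists by lying over, because every element of `S` becomes
integral over `A` after multiplication by a power of `c`.
-/

open Polynomial IntermediateField nonZeroDivisors Pointwise

section GeneratesAway

variable {A S : Type*} [CommRing A] [CommRing S] [Algebra A S]

/-- `θ` generates `S` over `A` away from the zero locus of `c`: every element of `S` is carried into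
`A[θ]` by a power of `c`. When `c` is a nonzerodivisor on `S`, this says that
`S[1/c] = A[1/c][θ]`. -/
def GeneratesAway (c : A) (θ : S) : Prop :=
  ∀ s : S, ∃ n : ℕ, c ^ n • s ∈ Algebra.adjoin A {θ}

theorem generatesAway_iff_exists_aeval {c : A} {θ : S} :
    GeneratesAway c θ ↔ ∀ s : S, ∃ (n : ℕ) (P : A[X]), aeval θ P = c ^ n • s := by
  simp only [GeneratesAway, Algebra.adjoin_singleton_eq_range_aeval, AlgHom.mem_range]

end GeneratesAway

theorem adjoin_simple_smul {K L : Type*} [Field K] [Field L] [Algebra K L] {a : K} (ha : a ≠ 0)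
    (x : L) : K⟮a • x⟯ = K⟮x⟯ := by
  refine le_antisymm ?_ ?_ <;> rw [adjoin_simple_le_iff]
  · exact smul_mem _ (mem_adjoin_simple_self K x)
  · simpa only [inv_smul_smul₀ ha] using smul_mem _ (mem_adjoin_simple_self K (a • x)) (x := a⁻¹)

section FractionField

variable {A S K L : Type*} [CommRing A] [CommRing S] [Algebra A S] [Field K] [Field L]
  [Algebra A K] [IsFractionRing A K] [Algebra S L] [Algebra K L] [Algebra A L]
  [IsScalarTower A K L]

theorem exists_monic_map_eq_minpoly_smul [IsDomain A] {x : L} (hx : IsIntegral K x) :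
    ∃ d : A, d ≠ 0 ∧ ∃ f : A[X], f.Monic ∧ f.map (algebraMap A K) = minpoly K (d • x) := by
  set g := minpoly K x
  have g_monic : g.Monic := minpoly.monic hx
  set d := IsLocalization.commonDenom A⁰ g.support g.coeff
  have d_ne_zero : (d : A) ≠ 0 := nonZeroDivisors.ne_zero d.2
  have lifts : g.scaleRoots (algebraMap A K d) ∈ lifts (algebraMap A K) :=
    IsLocalization.scaleRoots_commonDenom_mem_lifts A⁰ g ⟨1, by rw [map_one, g_monic]⟩
  obtain ⟨f, f_map, -, f_monic⟩ :=
    lifts_and_natDegree_eq_and_monic lifts ((monic_scaleRoots_iff _).2 g_monic)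
  refine ⟨d, d_ne_zero, f, f_monic, ?_⟩
  rw [f_map, ← algebraMap_smul K (d : A) x, IsIntegrallyClosed.minpoly_smul _ hx]
  exact (map_ne_zero_iff _ (IsFractionRing.injective A K)).2 d_ne_zero

variable [IsScalarTower A S L]

theorem exists_adjoin_algebraMap_eq_top [IsDomain S] [IsFractionRing S L]
    [Algebra.IsAlgebraic A S] [FiniteDimensional K L] [Algebra.IsSeparable K L] :
    ∃ s : S, K⟮algebraMap S L s⟯ = ⊤ := by
  obtain ⟨α, hα⟩ := Field.exists_primitive_element K L
  obtain ⟨x, y, hy, rfl⟩ := IsFractionRing.div_surjective (A := S) α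
  obtain ⟨s, d, hd, hs⟩ :=
    Algebra.IsAlgebraic.exists_smul_eq_mul A x (nonZeroDivisors.ne_zero hy)
  have y_ne_zero : algebraMap S L y ≠ 0 := IsFractionRing.to_map_ne_zero_of_mem_nonZeroDivisors hy
  have s_eq : algebraMap S L s = algebraMap A K d • (algebraMap S L x / algebraMap S L y) := by
    rw [algebraMap_smul, ← smul_div_assoc, eq_div_iff y_ne_zero, mul_comm, ← map_mul, ← hs,
      Algebra.smul_def, Algebra.smul_def, map_mul, ← IsScalarTower.algebraMap_apply]
  refine ⟨s, ?_⟩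
  rw [s_eq, adjoin_simple_smul, hα]
  exact (map_ne_zero_iff _ (IsFractionRing.injective A K)).2 hd

theorem exists_smul_mem_adjoin_of_adjoin_eq_top [IsDomain A] [IsFractionRing S L]
    [Algebra.IsAlgebraic K L] {θ : S} (hθ : K⟮algebraMap S L θ⟯ = ⊤) (s : S) :
    ∃ d : A, d ≠ 0 ∧ d • s ∈ Algebra.adjoin A {θ} := by
  obtain ⟨d, hd⟩ := multiple_mem_adjoin_of_mem_localization_adjoin A⁰ K {algebraMap S L θ}
    (algebraMap S L s) (by rw [adjoin_eq_top_iff.1 hθ]; trivial)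
  obtain ⟨t, ht, hts⟩ : (d : A) • algebraMap S L s ∈
      (Algebra.adjoin A {θ}).map (IsScalarTower.toAlgHom A S L) := by
    rwa [AlgHom.map_adjoin_singleton]
  have t_eq : t = (d : A) • s := IsFractionRing.injective S L
    (hts.trans (map_smul (IsScalarTower.toAlgHom A S L) (d : A) s).symm)
  exact ⟨d, nonZeroDivisors.ne_zero d.2, t_eq ▸ ht⟩

theorem exists_generatesAway [IsDomain A] [Algebra.FiniteType A S] [IsFractionRing S L]
    [Algebra.IsAlgebraic K L] {θ : S} (hθ : K⟮algebraMap S L θ⟯ = ⊤) :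
    ∃ c : A, c ≠ 0 ∧ GeneratesAway c θ := by
  choose d d_ne_zero hd using exists_smul_mem_adjoin_of_adjoin_eq_top (A := A) hθ
  obtain ⟨t, ht⟩ := (Algebra.FiniteType.out : (⊤ : Subalgebra A S).FG)
  refine ⟨∏ x ∈ t, d x, Finset.prod_ne_zero_iff.2 fun x _ => d_ne_zero x, fun s => ?_⟩
  have smul_subset : (∏ x ∈ t, d x) • (t : Set S) ⊆ Algebra.adjoin A {θ} := by
    rintro _ ⟨x, hx, rfl⟩
    obtain ⟨e, he⟩ := Finset.dvd_prod_of_mem d hx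
    simp only [he, mul_comm (d x), mul_smul]
    exact Subalgebra.smul_mem _ (hd x) e
  obtain ⟨n, hn⟩ := Algebra.pow_smul_mem_of_smul_subset_of_mem_adjoin (∏ x ∈ t, d x) (t : Set S)
    (Algebra.adjoin A {θ}) smul_subset (ht ▸ Algebra.mem_top : s ∈ _)
    (Subalgebra.algebraMap_mem _ _)
  exact ⟨n, hn n le_rfl⟩

end FractionField

theorem exists_monic_irreducible_generatesAway {A S : Type*} [CommRing A] [IsDomain A] [CommRing S]
    [IsDomain S] [Algebra A S] [FaithfulSMul A S] [Algebra.FiniteType A S] [Algebra.IsAlgebraic A S]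
    [PerfectField (FractionRing A)] :
    ∃ (θ : S) (f : A[X]) (c : A), f.Monic ∧ Irreducible (f.map (algebraMap A (FractionRing A))) ∧
      aeval θ f = 0 ∧ c ≠ 0 ∧ GeneratesAway c θ := by
  let K := FractionRing A
  let L := FractionRing S
  let : Algebra K L := FractionRing.liftAlgebra A L
  have : Algebra.IsAlgebraic K L := by
    have : Algebra.IsAlgebraic S L := IsLocalization.isAlgebraic L S⁰
    exact (IsFractionRing.comap_isAlgebraic_iff (A := A)).1 (Algebra.IsAlgebraic.trans A S L)
  have : Algebra.EssFiniteType A L := Algebra.EssFiniteType.comp A S L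
  have : Algebra.EssFiniteType K L := Algebra.EssFiniteType.of_comp A K L
  have : FiniteDimensional K L := Algebra.finite_of_essFiniteType_of_isAlgebraic
  obtain ⟨s, hs⟩ := exists_adjoin_algebraMap_eq_top (A := A) (S := S) (K := K) (L := L)
  obtain ⟨d, hd, f, f_monic, f_map⟩ :=
    exists_monic_map_eq_minpoly_smul (A := A) (Algebra.IsIntegral.isIntegral (R := K)
      (algebraMap S L s))
  have smul_eq : algebraMap S L (d • s) = d • algebraMap S L s :=
    map_smul (IsScalarTower.toAlgHom A S L) d s
  have primitive : K⟮algebraMap S L (d • s)⟯ = ⊤ := by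
    rw [smul_eq, ← algebraMap_smul K d, adjoin_simple_smul _, hs]
    exact (map_ne_zero_iff _ (IsFractionRing.injective A K)).2 hd
  have root : aeval (d • s) f = 0 := by
    apply IsFractionRing.injective S L
    rw [← aeval_algebraMap_apply, ← aeval_map_algebraMap K, f_map, smul_eq, minpoly.aeval, map_zero]
  obtain ⟨c, hc, hgen⟩ := exists_generatesAway (A := A) primitive
  exact ⟨d • s, f, c, f_monic, f_map ▸ minpoly.irreducible (Algebra.IsIntegral.isIntegral _),
    root, hc, hgen⟩

section LyingOver

variable {A S : Type*} [CommRing A] [CommRing S] [Algebra A S]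

theorem exists_pow_smul_mem_of_mem_map {A' : Subalgebra A S} {c : A}
    (h : ∀ s : S, ∃ n : ℕ, c ^ n • s ∈ A') {I : Ideal A} {s : S}
    (hs : s ∈ I.map (algebraMap A S)) :
    ∃ (n : ℕ) (y : A'), y ∈ I.map (algebraMap A A') ∧ (y : S) = c ^ n • s := by
  induction hs using Submodule.span_induction with
  | mem _ hx =>
    obtain ⟨a, ha, rfl⟩ := hx
    exact ⟨0, algebraMap A A' a, Ideal.mem_map_of_mem _ ha, by rw [pow_zero, one_smul]; rfl⟩
  | zero => exact ⟨0, 0, zero_mem _, by rw [smul_zero]; rfl⟩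
  | add x x' _ _ ihx ihx' =>
    obtain ⟨n, y, hy, hyx⟩ := ihx
    obtain ⟨n', y', hy', hyx'⟩ := ihx'
    refine ⟨n + n', c ^ n' • y + c ^ n • y', add_mem (Submodule.smul_of_tower_mem _ _ hy)
      (Submodule.smul_of_tower_mem _ _ hy'), ?_⟩
    push_cast
    rw [hyx, hyx', smul_smul, smul_smul, smul_add, pow_add, mul_comm (c ^ n')]
  | smul t x _ ihx =>
    obtain ⟨n, y, hy, hyx⟩ := ihx
    obtain ⟨m, hm⟩ := h t
    refine ⟨m + n, ⟨_, hm⟩ * y, Ideal.mul_mem_left _ _ hy, ?_⟩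
    rw [MulMemClass.coe_mul, hyx, smul_eq_mul, smul_mul_smul_comm, pow_add]

theorem exists_isPrime_comap_eq_of_isIntegral_pow_smul [FaithfulSMul A S] {c : A}
    (h : ∀ s : S, ∃ n : ℕ, IsIntegral A (c ^ n • s)) {p : Ideal A}
    [p_prime : p.IsPrime] (hc : c ∉ p) :
    ∃ q : Ideal S, q.IsPrime ∧ q.comap (algebraMap A S) = p := by
  refine (Ideal.comap_map_eq_self_iff_of_isPrime p).1 (le_antisymm (fun a ha => ?_)
    Ideal.le_comap_map)
  have : FaithfulSMul A (integralClosure A S) := .tower_bot A _ S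
  obtain ⟨⟨Q, _, Q_over⟩⟩ : Nonempty (p.primesOver (integralClosure A S)) := inferInstance
  obtain ⟨n, y, hy, y_eq⟩ := exists_pow_smul_mem_of_mem_map (A' := integralClosure A S) h ha
  have y_eq' : y = algebraMap A (integralClosure A S) (c ^ n * a) := by
    ext
    rw [y_eq, Algebra.smul_def, ← map_mul]
    rfl
  have mem : c ^ n * a ∈ p := by
    rw [Q_over.over, Ideal.mem_comap, ← y_eq']
    exact Ideal.map_le_iff_le_comap.2 Q_over.over.le hy
  exact (p_prime.mem_or_mem mem).resolve_left fun hcn => hc (p_prime.mem_of_pow_mem n hcn)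

end LyingOver

section Specialization

variable {A S k l : Type*} [CommRing A] [CommRing S] [Algebra A S] [Field k] [Field l]
  [Algebra A k] [Algebra S l] [Algebra k l] [Algebra A l] [IsScalarTower A S l]
  [IsScalarTower A k l] {θ : S} {f : A[X]} {c : A}

theorem minpoly_algebraMap_eq_map (f_monic : f.Monic) (root : aeval θ f = 0)
    (f_irr : Irreducible (f.map (algebraMap A k))) :
    minpoly k (algebraMap S l θ) = f.map (algebraMap A k) := by
  refine (minpoly.eq_of_irreducible_of_monic f_irr ?_ (f_monic.map _)).symm
  rw [aeval_map_algebraMap, aeval_algebraMap_apply, root, map_zero]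

theorem algebraMap_aeval_eq_zero_iff_map_dvd (l) [Field l] [Algebra S l] [Algebra k l] [Algebra A l]
    [IsScalarTower A S l] [IsScalarTower A k l] (f_monic : f.Monic) (root : aeval θ f = 0)
    (f_irr : Irreducible (f.map (algebraMap A k))) (P : A[X]) :
    algebraMap S l (aeval θ P) = 0 ↔ f.map (algebraMap A k) ∣ P.map (algebraMap A k) := by
  rw [← minpoly_algebraMap_eq_map (l := l) f_monic root f_irr, minpoly.dvd_iff,
    aeval_map_algebraMap, aeval_algebraMap_apply]

theorem GeneratesAway.adjoin_eq_top (h : GeneratesAway c θ) (hc : algebraMap A k c ≠ 0)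
    (div_surjective : ∀ x : l, ∃ s t : S, algebraMap S l s / algebraMap S l t = x) :
    k⟮algebraMap S l θ⟯ = ⊤ := by
  have algebraMap_mem (s : S) : algebraMap S l s ∈ k⟮algebraMap S l θ⟯ := by
    obtain ⟨n, P, hP⟩ := generatesAway_iff_exists_aeval.1 h s
    have hs : algebraMap S l s =
        (algebraMap A k c ^ n)⁻¹ • aeval (algebraMap S l θ) (P.map (algebraMap A k)) := by
      rw [aeval_map_algebraMap, aeval_algebraMap_apply, hP, eq_inv_smul_iff₀ (pow_ne_zero n hc),
        ← map_pow, algebraMap_smul]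
      exact (map_smul (IsScalarTower.toAlgHom A S l) _ s).symm
    rw [hs]
    exact smul_mem _ (algebra_adjoin_le_adjoin k _ (aeval_mem_adjoin_singleton k _))
  refine eq_top_iff.2 fun x _ => ?_
  obtain ⟨s, t, rfl⟩ := div_surjective x
  exact div_mem (algebraMap_mem s) (algebraMap_mem t)

theorem GeneratesAway.rank_eq_natDegree (h : GeneratesAway c θ) (hc : algebraMap A k c ≠ 0)
    (div_surjective : ∀ x : l, ∃ s t : S, algebraMap S l s / algebraMap S l t = x)
    (f_monic : f.Monic) (root : aeval θ f = 0) (f_irr : Irreducible (f.map (algebraMap A k))) :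
    Module.rank k l = f.natDegree := by
  have minpoly_eq := minpoly_algebraMap_eq_map (l := l) f_monic root f_irr
  have integral : IsIntegral k (algebraMap S l θ) :=
    minpoly.ne_zero_iff.1 (minpoly_eq ▸ f_irr.ne_zero)
  have := adjoin.finiteDimensional integral
  rw [← rank_top', ← h.adjoin_eq_top hc div_surjective, ← Module.finrank_eq_rank,
    adjoin.finrank integral, minpoly_eq, f_monic.natDegree_map]

end Specialization

section ResidueField

theorem resCanon_eq_algebraMap (R : Type*) [CommRing R] (p : Ideal R) :
    resCanon R p = algebraMap R (resField R p) :=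
  rfl

theorem algebraMap_resField_eq_zero_iff {R : Type*} [CommRing R] {p : Ideal R} {r : R} :
    algebraMap R (resField R p) r = 0 ↔ r ∈ p := by
  rw [IsScalarTower.algebraMap_apply R (R ⧸ p), Ideal.Quotient.algebraMap_eq,
    map_eq_zero_iff _ (IsFractionRing.injective (R ⧸ p) (resField R p)),
    Ideal.Quotient.eq_zero_iff_mem]

theorem exists_algebraMap_div_eq_resField {R : Type*} [CommRing R] {p : Ideal R} [p.IsPrime]
    (x : resField R p) :
    ∃ r t : R, algebraMap R (resField R p) r / algebraMap R (resField R p) t = x := by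
  obtain ⟨r, t, -, rfl⟩ := IsFractionRing.div_surjective (A := R ⧸ p) x
  obtain ⟨r, rfl⟩ := Ideal.Quotient.mk_surjective r
  obtain ⟨t, rfl⟩ := Ideal.Quotient.mk_surjective t
  exact ⟨r, t, rfl⟩

variable {A S : Type*} [CommRing A] [CommRing S] [Algebra A S]

/-- The `κ(p)`-algebra structure on `κ(q)`, for a prime `q` lying over `p`. It depends on the proof
that `q` lies over `p`, so it is introduced locally and is not an instance. -/
noncomputable abbrev resFieldAlgebra {p : Ideal A} {q : Ideal S} [p.IsPrime] [q.IsPrime]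
    (h : q.comap (algebraMap A S) = p) : Algebra (resField A p) (resField S q) :=
  (resFieldMap (algebraMap A S) p q h).toAlgebra

theorem isScalarTower_resField {p : Ideal A} {q : Ideal S} [p.IsPrime] [q.IsPrime]
    (h : q.comap (algebraMap A S) = p) :
    letI := resFieldAlgebra h
    IsScalarTower A (resField A p) (resField S q) := by
  let := resFieldAlgebra h
  refine .of_algebraMap_eq fun a => ?_
  rw [RingHom.algebraMap_toAlgebra, resFieldMap, ← resCanon_eq_algebraMap A p, resCanon,
    RingHom.comp_apply, IsFractionRing.lift_algebraMap]
  rfl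

theorem mem_iff_map_dvd_map_of_aeval_eq {θ : S} {f : A[X]} {c : A} {p : PrimeSpectrum A}
    (hc : c ∉ p.asIdeal) (f_monic : f.Monic) (root : aeval θ f = 0) (hp : p ∈ irreduciblePolySet f)
    {q : PrimeSpectrum S} (hq : q.asIdeal.comap (algebraMap A S) = p.asIdeal)
    {s : S} {n : ℕ} {P : A[X]} (hP : aeval θ P = c ^ n • s) :
    s ∈ q.asIdeal ↔ f.map (resCanon A p.asIdeal) ∣ P.map (resCanon A p.asIdeal) := by
  let := resFieldAlgebra hq
  have := isScalarTower_resField hq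
  have pow_notMem : algebraMap A S (c ^ n) ∉ q.asIdeal := by
    rw [← Ideal.mem_comap, hq]
    exact fun hcn => hc (p.2.mem_of_pow_mem n hcn)
  rw [resCanon_eq_algebraMap, ← algebraMap_aeval_eq_zero_iff_map_dvd (resField S q.asIdeal)
    f_monic root hp, hP, algebraMap_resField_eq_zero_iff, Algebra.smul_def,
    q.2.mul_mem_iff_mem_or_mem, or_iff_right pow_notMem]

end ResidueField

namespace GeneratesAway

variable {A S : Type*} [CommRing A] [CommRing S] [Algebra A S] {θ : S} {f : A[X]} {c : A}

theorem fracRank_eq_natDegree [IsDomain A] [IsDomain S] [FaithfulSMul A S]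
    (h : GeneratesAway c θ) (hc : c ≠ 0) (f_monic : f.Monic) (root : aeval θ f = 0)
    (f_irr : Irreducible (f.map (algebraMap A (FractionRing A)))) :
    fracRank (algebraMap A S) = f.natDegree := by
  let : Algebra (FractionRing A) (FractionRing S) := FractionRing.liftAlgebra A (FractionRing S)
  rw [fracRank, dif_pos (FaithfulSMul.algebraMap_injective A S)]
  refine h.rank_eq_natDegree (k := FractionRing A) (l := FractionRing S)
    ((map_ne_zero_iff _ (IsFractionRing.injective A _)).2 hc) (fun x => ?_) f_monic root f_irr
  obtain ⟨s, t, -, rfl⟩ := IsFractionRing.div_surjective (A := S) x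
  exact ⟨s, t, rfl⟩

theorem resRank_eq_natDegree (h : GeneratesAway c θ) {p : PrimeSpectrum A} (hc : c ∉ p.asIdeal)
    (f_monic : f.Monic) (root : aeval θ f = 0) (hp : p ∈ irreduciblePolySet f)
    {q : PrimeSpectrum S} (hq : q.asIdeal.comap (algebraMap A S) = p.asIdeal) :
    resRank (algebraMap A S) p q = f.natDegree := by
  let := resFieldAlgebra hq
  have := isScalarTower_resField hq
  rw [resRank, dif_pos hq]
  exact h.rank_eq_natDegree (k := resField A p.asIdeal) (l := resField S q.asIdeal)
    (algebraMap_resField_eq_zero_iff.not.2 hc) exists_algebraMap_div_eq_resField f_monic root hp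

theorem eq_of_comap_eq (h : GeneratesAway c θ) {p : PrimeSpectrum A} (hc : c ∉ p.asIdeal)
    (f_monic : f.Monic) (root : aeval θ f = 0) (hp : p ∈ irreduciblePolySet f)
    {q q' : PrimeSpectrum S} (hq : q.asIdeal.comap (algebraMap A S) = p.asIdeal)
    (hq' : q'.asIdeal.comap (algebraMap A S) = p.asIdeal) : q = q' := by
  ext s
  obtain ⟨n, P, hP⟩ := generatesAway_iff_exists_aeval.1 h s
  rw [mem_iff_map_dvd_map_of_aeval_eq hc f_monic root hp hq hP,
    mem_iff_map_dvd_map_of_aeval_eq hc f_monic root hp hq' hP]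

theorem exists_comap_eq [FaithfulSMul A S] (h : GeneratesAway c θ) (f_monic : f.Monic)
    (root : aeval θ f = 0) {p : Ideal A} [p.IsPrime] (hc : c ∉ p) :
    ∃ q : Ideal S, q.IsPrime ∧ q.comap (algebraMap A S) = p := by
  refine exists_isPrime_comap_eq_of_isIntegral_pow_smul (fun s => ?_) hc
  obtain ⟨n, hn⟩ := h s
  have integral : IsIntegral A θ := ⟨f, f_monic, root⟩
  exact ⟨n, adjoin_le_integralClosure integral hn⟩

theorem inter_subset_basicHilbertSet [IsDomain A] [IsDomain S] [FaithfulSMul A S]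
    (h : GeneratesAway c θ) (f_monic : f.Monic) (root : aeval θ f = 0)
    (f_irr : Irreducible (f.map (algebraMap A (FractionRing A)))) :
    irreduciblePolySet f ∩ {p : PrimeSpectrum A | c ∉ p.asIdeal} ⊆
      basicHilbertSet (algebraMap A S) := by
  rintro p ⟨hp, hc⟩
  have c_ne_zero : c ≠ 0 := fun h0 => hc (h0 ▸ zero_mem _)
  obtain ⟨q, q_prime, hq⟩ := h.exists_comap_eq f_monic root hc
  refine ⟨⟨⟨q, q_prime⟩, hq, fun q' hq' => h.eq_of_comap_eq hc f_monic root hp hq' hq⟩,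
    fun q' hq' => ?_⟩
  rw [h.resRank_eq_natDegree hc f_monic root hp hq',
    h.fracRank_eq_natDegree c_ne_zero f_monic root f_irr]

end GeneratesAway

theorem AlgExt.exists_inter_subset_basicHilbertSet {A : Type u} [CommRing A] [IsDomain A]
    [PerfectField (FractionRing A)] (E : AlgExt A) :
    ∃ (f : A[X]) (c : A), f.Monic ∧ Irreducible (f.map (algebraMap A (FractionRing A))) ∧ c ≠ 0 ∧
      irreduciblePolySet f ∩ {p : PrimeSpectrum A | c ∉ p.asIdeal} ⊆ basicHilbertSet E.hom := by
  let : Algebra A E.carrier := E.hom.toAlgebra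
  have : FaithfulSMul A E.carrier := (faithfulSMul_iff_algebraMap_injective A E.carrier).2 E.inj
  have : Algebra.IsAlgebraic A E.carrier := ⟨E.alg⟩
  have : Algebra.FiniteType A E.carrier := E.ft
  obtain ⟨θ, f, c, f_monic, f_irr, root, hc, h⟩ :=
    exists_monic_irreducible_generatesAway (A := A) (S := E.carrier)
  exact ⟨f, c, f_monic, f_irr, hc, h.inter_subset_basicHilbertSet f_monic root f_irr⟩

theorem hilbertSet_contains_irreduciblePolySet_general (B₀ : Type u) [CommRing B₀] [IsDomain B₀]
    [PerfectField (FractionRing B₀)] (H : Set (PrimeSpectrum B₀)) (hH : IsHilbertSet H) :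
    ∃ (m : ℕ) (f : Fin m → Polynomial B₀) (b : B₀),
      (∀ i, (f i).Monic) ∧
      (∀ i, Irreducible ((f i).map (algebraMap B₀ (FractionRing B₀)))) ∧
      b ≠ 0 ∧
      (⋂ i, irreduciblePolySet (f i)) ∩ {p : PrimeSpectrum B₀ | b ∉ p.asIdeal} ⊆ H := by
  obtain ⟨r, E, b, hb, rfl⟩ := hH
  choose f c f_monic f_irr hc subset using fun i => (E i).exists_inter_subset_basicHilbertSet
  refine ⟨r, f, b * ∏ i, c i, f_monic, f_irr,
    mul_ne_zero hb (Finset.prod_ne_zero_iff.2 fun i _ => hc i), ?_⟩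
  rintro p ⟨hp, hbc⟩
  have b_notMem : b ∉ p.asIdeal := fun h => hbc (Ideal.mul_mem_right _ _ h)
  have c_notMem (i : Fin r) : c i ∉ p.asIdeal := fun h =>
    hbc (Ideal.mul_mem_left _ _ (Ideal.prod_mem _ (Finset.mem_univ i) h))
  exact ⟨Set.mem_iInter.2 fun i => subset i ⟨Set.mem_iInter.1 hp i, c_notMem i⟩, b_notMem⟩

/-- **Hilbert sets contain sets defined by irreducibility of polynomials.**
Let `k₀` be a field of characteristic zero and `B₀` a finitely generated `k₀`-algebra that is
an integral domain.  For every Hilbert subset `H` of `Spec(B₀)` there exist finitely many monic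
polynomials `f 0, …, f (m-1) ∈ B₀[y]`, each irreducible in `Frac(B₀)[y]`, and a nonzero
`b ∈ B₀` such that `H_{B₀}(f 0, …, f (m-1)) ∩ D(b) ⊆ H`. -/
theorem hilbertSet_contains_irreduciblePolySet
    (k₀ : Type*) [Field k₀] [CharZero k₀]
    (B₀ : Type u) [CommRing B₀] [IsDomain B₀] [Algebra k₀ B₀] [Algebra.FiniteType k₀ B₀]
    (H : Set (PrimeSpectrum B₀)) (hH : IsHilbertSet H) :
    ∃ (m : ℕ) (f : Fin m → Polynomial B₀) (b : B₀),
      (∀ i, (f i).Monic) ∧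
      (∀ i, Irreducible ((f i).map (algebraMap B₀ (FractionRing B₀)))) ∧
      b ≠ 0 ∧
      (⋂ i, irreduciblePolySet (f i)) ∩ {p : PrimeSpectrum B₀ | b ∉ p.asIdeal} ⊆ H := by
  have : CharZero B₀ := charZero_of_injective_algebraMap (algebraMap k₀ B₀).injective
  exact hilbertSet_contains_irreduciblePolySet_general B₀ H hH
end

section
/- Let k₀ be a field of characteristic zero and B₀ a finitely generated k₀-algebra that is an integral domain such that B₀ ⊗_{k₀} \bar{k₀} is an integral domain; let K₀ = Frac(B₀). Let 𝒮 be a scheme of finite type over Spec(B₀), let B₁ ⊆ \overline{K₀} be a finitely generated B₀-algebra, and let s : Spec(B₁) → 𝒮 be a morphism over Spec(B₀) such that the induced homomorphism of residue fields κ(s(ξ)) → κ(ξ) is an isomorphism, where ξ is the generic point of Spec(B₁). Then there exists a nonempty open subset U₁ of Spec(B₁) such that for every x₁ ∈ U₁ the induced homomorphism of residue fields κ(s(x₁)) → κ(x₁) is an isomorphism. -/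
open AlgebraicGeometry CategoryTheory

/-! A morphism `s : Spec B₁ ⟶ 𝒮` over `Spec B₀` is itself locally of finite type, because `B₁` is
finitely generated over `B₀`. So near `s ξ` and `ξ` it is given by a finitely generated algebra
`B` over a ring `A`. As `κ(s ξ) → κ(ξ)` is surjective, the value at `ξ` of each generator of `B`
comes from the value at `s ξ` of a section `t` of `𝒮`. Two sections that agree at `ξ` agree at
every specialization `x` of `ξ` where both are defined, so after shrinking to the domain of `t` the
value of the generator at `x` comes from the value of `t` at `s x`. Finitely many generators need
only finitely many shrinkings, and then `κ(x)`, which consists of fractions of values of elements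
of `B`, is the image of `κ(s x)`.
-/

open scoped Topology

universe u

section Evaluation

variable {X Y : Scheme.{u}}

lemma evaluation_map_apply {U W : X.Opens} (h : W ≤ U) {x : X} (hx : x ∈ W) (f : Γ(X, U)) :
    X.evaluation W x hx (X.presheaf.map (homOfLE h).op f) = X.evaluation U x (h hx) f :=
  congrArg (X.residue x) (X.presheaf.germ_res_apply (homOfLE h) x hx f)

lemma evaluation_appLE_apply (s : X ⟶ Y) {U : X.Opens} {V : Y.Opens} (e : U ≤ s ⁻¹ᵁ V) {x : X}
    (hx : x ∈ U) (a : Γ(Y, V)) :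
    X.evaluation U x hx (s.appLE V U e a) =
      s.residueFieldMap x (Y.evaluation V (s x) (e hx) a) :=
  (evaluation_map_apply e hx (s.app V a)).trans (Scheme.evaluation_naturality_apply s x _ a).symm

lemma evaluation_eq_of_specializes {U : X.Opens} {η x : X} (hηx : η ⤳ x) (hη : η ∈ U)
    (hx : x ∈ U) {f g : Γ(X, U)} (hfg : X.evaluation U η hη f = X.evaluation U η hη g) :
    X.evaluation U x hx f = X.evaluation U x hx g := by
  rw [← sub_eq_zero, ← map_sub, Scheme.evaluation_eq_zero_iff_notMem_basicOpen] at hfg ⊢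
  exact mt (hηx.mem_open (X.basicOpen (f - g)).isOpen) hfg

lemma exists_evaluation_eq {x : X} (z : X.residueField x) :
    ∃ (U : X.Opens) (hx : x ∈ U) (f : Γ(X, U)), X.evaluation U x hx f = z := by
  obtain ⟨r, rfl⟩ := X.residue_surjective x z
  obtain ⟨U, hx, f, rfl⟩ := X.presheaf.exists_germ_eq r
  exact ⟨U, hx, f, rfl⟩

lemma exists_eq_evaluation_div_evaluation {U : X.Opens} (hU : IsAffineOpen U) {x : X} (hx : x ∈ U)
    (z : X.residueField x) :
    ∃ f g : Γ(X, U), z = X.evaluation U x hx f / X.evaluation U x hx g := by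
  obtain ⟨r, rfl⟩ := X.residue_surjective x z
  let : Algebra Γ(X, U) (X.presheaf.stalk x) := (X.presheaf.germ U x hx).hom.toAlgebra
  have : IsLocalization.AtPrime (X.presheaf.stalk x) (hU.primeIdealOf ⟨x, hx⟩).asIdeal :=
    hU.isLocalization_stalk ⟨x, hx⟩
  obtain ⟨⟨f, g⟩, hfg⟩ :=
    IsLocalization.surj (hU.primeIdealOf ⟨x, hx⟩).asIdeal.primeCompl r
  have hg : IsUnit (X.evaluation U x hx g) :=
    (IsLocalization.map_units (X.presheaf.stalk x) g).map (X.residue x).hom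
  have hzg : X.residue x r * X.evaluation U x hx g = X.evaluation U x hx f :=
    (map_mul (X.residue x).hom _ _).symm.trans (congrArg (X.residue x) hfg)
  exact ⟨f, g, eq_div_of_mul_eq hg.ne_zero hzg⟩

end Evaluation

lemma exists_finset_closure_range_union_eq_top {A B : Type*} [CommRing A] [CommRing B]
    {φ : A →+* B} (hφ : φ.FiniteType) :
    ∃ T : Finset B, Subring.closure (Set.range φ ∪ T) = ⊤ := by
  algebraize [φ]
  obtain ⟨T, hT⟩ := Algebra.FiniteType.out (R := A) (A := B)
  refine ⟨T, ?_⟩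
  rw [← RingHom.algebraMap_toAlgebra φ, ← Algebra.adjoin_eq_ring_closure, hT,
    Algebra.top_toSubring]

section ResidueFieldMap

variable {X Y : Scheme.{u}} (s : X ⟶ Y)

lemma isIso_residueFieldMap_of_evaluation_mem_fieldRange {U : X.Opens} {V : Y.Opens}
    (hU : IsAffineOpen U) (e : U ≤ s ⁻¹ᵁ V) {T : Set Γ(X, U)}
    (hT : Subring.closure (Set.range (s.appLE V U e) ∪ T) = ⊤) {x : X} (hx : x ∈ U)
    (hTx : ∀ b ∈ T, X.evaluation U x hx b ∈ (s.residueFieldMap x).hom.fieldRange) :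
    IsIso (s.residueFieldMap x) := by
  let K := (s.residueFieldMap x).hom.fieldRange
  have hclosure : Subring.closure (Set.range (s.appLE V U e) ∪ T) ≤
      K.toSubring.comap (X.evaluation U x hx).hom := by
    rw [Subring.closure_le]
    rintro _ (⟨a, rfl⟩ | hb)
    · exact ⟨_, (evaluation_appLE_apply s e hx a).symm⟩
    · exact hTx _ hb
  have hmem (b : Γ(X, U)) : X.evaluation U x hx b ∈ K := hclosure (hT ▸ Subring.mem_top b)
  rw [ConcreteCategory.isIso_iff_bijective]
  refine ⟨(s.residueFieldMap x).hom.injective, fun z => ?_⟩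
  obtain ⟨f, g, rfl⟩ := exists_eq_evaluation_div_evaluation hU hx z
  exact div_mem (hmem f) (hmem g)

lemma eventually_evaluation_mem_fieldRange {U : X.Opens} {η : X} (hη : η ∈ U) {b : Γ(X, U)}
    (hb : X.evaluation U η hη b ∈ (s.residueFieldMap η).hom.fieldRange) :
    ∀ᶠ x in 𝓝 η, η ⤳ x → ∀ hx : x ∈ U,
      X.evaluation U x hx b ∈ (s.residueFieldMap x).hom.fieldRange := by
  obtain ⟨z, hz⟩ := hb
  obtain ⟨V, hηV, t, rfl⟩ := exists_evaluation_eq z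
  let W : X.Opens := U ⊓ s ⁻¹ᵁ V
  have hηW : η ∈ W := ⟨hη, hηV⟩
  have hWV : W ≤ s ⁻¹ᵁ V := inf_le_right
  have hWU : W ≤ U := inf_le_left
  have heq : X.evaluation W η hηW (s.appLE V W hWV t) =
      X.evaluation W η hηW (X.presheaf.map (homOfLE hWU).op b) := by
    rw [evaluation_appLE_apply, evaluation_map_apply]
    exact hz
  filter_upwards [W.isOpen.mem_nhds hηW] with x hxW hηx hxU
  refine ⟨Y.evaluation V (s x) hxW.2 t, ?_⟩
  calc s.residueFieldMap x (Y.evaluation V (s x) hxW.2 t)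
      = X.evaluation W x hxW (s.appLE V W hWV t) := (evaluation_appLE_apply s hWV hxW t).symm
    _ = X.evaluation W x hxW (X.presheaf.map (homOfLE hWU).op b) :=
        evaluation_eq_of_specializes hηx hηW hxW heq
    _ = X.evaluation U x hxU b := evaluation_map_apply hWU hxW b

theorem residueField_iso_spreads_out_general [LocallyOfFiniteType s] {η : X}
    (hη : IsIso (s.residueFieldMap η)) :
    ∀ᶠ x in 𝓝 η, η ⤳ x → IsIso (s.residueFieldMap x) := by
  obtain ⟨V, hV, hηV, -⟩ :=
    exists_isAffineOpen_mem_and_subset (TopologicalSpace.Opens.mem_top (s η))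
  obtain ⟨U, hU, hηU, e⟩ := exists_isAffineOpen_mem_and_subset (U := s ⁻¹ᵁ V) hηV
  obtain ⟨T, hT⟩ := exists_finset_closure_range_union_eq_top (s.finiteType_appLE hV hU e)
  have hspread : ∀ᶠ x in 𝓝 η, ∀ b ∈ T, η ⤳ x → ∀ hx : x ∈ U,
      X.evaluation U x hx b ∈ (s.residueFieldMap x).hom.fieldRange :=
    (Filter.eventually_all_finset T).mpr fun b _ =>
      eventually_evaluation_mem_fieldRange s hηU
        ((ConcreteCategory.bijective_of_isIso (s.residueFieldMap η)).2 _)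
  filter_upwards [hspread, U.isOpen.mem_nhds hηU] with x hTx hxU hηx
  exact isIso_residueFieldMap_of_evaluation_mem_fieldRange s hU e hT hxU
    fun b hb => hTx b hb hηx hxU

end ResidueFieldMap

lemma locallyOfFiniteType_of_comp_eq_SpecMap {R A : CommRingCat.{u}} {φ : R ⟶ A}
    (hφ : φ.hom.FiniteType) {Y : Scheme.{u}} {s : Spec A ⟶ Y} {p : Y ⟶ Spec R}
    (hsp : s ≫ p = Spec.map φ) : LocallyOfFiniteType s := by
  have : LocallyOfFiniteType (s ≫ p) := by
    rwa [hsp, HasRingHomProperty.Spec_iff (P := @LocallyOfFiniteType)]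
  exact locallyOfFiniteType_of_comp s p

/-- **Residue field isomorphisms spread out from the generic point.**
Let `k₀` be a field of characteristic zero and `B₀` a finitely generated `k₀`-algebra that is
an integral domain such that `B₀ ⊗_{k₀} \bar{k₀}` is an integral domain; let
`K₀ = Frac(B₀)`.  Let `𝒮` be a scheme of finite type over `Spec B₀`, let
`B₁ ⊆ \overline{K₀}` be a finitely generated `B₀`-algebra, and let `s : Spec B₁ → 𝒮` be a
morphism over `Spec B₀` such that the induced homomorphism of residue fields
`κ(s(ξ)) → κ(ξ)` is an isomorphism, where `ξ` is the generic point of `Spec B₁`.  Then there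
is a nonempty open subset `U₁` of `Spec B₁` such that for every `x₁ ∈ U₁` the induced
homomorphism of residue fields `κ(s(x₁)) → κ(x₁)` is an isomorphism. -/
theorem residueField_iso_spreads_out
    (k₀ : Type) [Field k₀] [CharZero k₀]
    (B₀ : Type) [CommRing B₀] [IsDomain B₀] [Algebra k₀ B₀] [Algebra.FiniteType k₀ B₀]
    (hgeom : IsDomain (TensorProduct k₀ B₀ (AlgebraicClosure k₀)))
    (B₁ : Type) [CommRing B₁] [IsDomain B₁] [Algebra B₀ B₁] [Algebra.FiniteType B₀ B₁]
    -- `B₁` is a subring of the algebraic closure of `K₀ = Frac B₀`, compatibly with `B₀`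
    (ι : B₁ →+* AlgebraicClosure (FractionRing B₀))
    (hι : Function.Injective ι)
    (hcomp : ι.comp (algebraMap B₀ B₁) =
      (algebraMap (FractionRing B₀) (AlgebraicClosure (FractionRing B₀))).comp
        (algebraMap B₀ (FractionRing B₀)))
    -- `𝒮` is of finite type over `Spec B₀`
    (𝒮 : Scheme) (p : 𝒮 ⟶ Spec (CommRingCat.of B₀))
    [LocallyOfFiniteType p] [QuasiCompact p]
    -- a morphism `s` over `Spec B₀`
    (s : Spec (CommRingCat.of B₁) ⟶ 𝒮)
    (hover : s ≫ p = Spec.map (CommRingCat.ofHom (algebraMap B₀ B₁)))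
    -- at the generic point `ξ` of `Spec B₁`, the residue field map is an isomorphism
    (hgen : IsIso (s.residueFieldMap
      ((⟨⊥, Ideal.bot_prime⟩ : PrimeSpectrum B₁) : ↑(Spec (CommRingCat.of B₁))))) :
    ∃ U₁ : (Spec (CommRingCat.of B₁)).Opens, U₁.carrier.Nonempty ∧
      ∀ x₁ ∈ U₁, IsIso (s.residueFieldMap x₁) := by
  have : LocallyOfFiniteType s :=
    locallyOfFiniteType_of_comp_eq_SpecMap (RingHom.finiteType_algebraMap.mpr inferInstance) hover
  obtain ⟨U, hU, hUopen, hξU⟩ :=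
    eventually_nhds_iff.mp (residueField_iso_spreads_out_general s hgen)
  exact ⟨⟨U, hUopen⟩, ⟨_, hξU⟩, fun x hx =>
    hU x hx ((PrimeSpectrum.le_iff_specializes _ x).mp bot_le)⟩
end
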